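/- For every real K ≥ 1 there is a constant C(K) > 0, depending only on K, with the following property. Let G = (V,E) be a finite connected graph, and let P be a row-stochastic matrix conformant with G that is irreducible, reversible with respect to its positive stationary distribution π, satisfies P_{ii} ≥ 1/2 for every i, and has max_i π_i ≤ K·min_i π_i. Write π₀ = min_i π_i, let Φ(P) be the conductance of P, and let E(P) = {(i,j) : i ≠ j and (P_{ij} ≠ 0 or P_{ji} ≠ 0)}. Then there exist a finite set V̂, a map f : V̂ → V, and a row-stochastic matrix P̂ on V̂ with positive stationary distribution π̂, such that: (a) P̂ is a lifting of P with respect to f; (b) the number of pairs (û,v̂) with û ≠ v̂ and P̂_{ûv̂} > 0 is at most C(K)·|E(P)|·(1/Φ(P))·(1 + log(1/π₀)); and (c) for every t ≥ C(K)·(1/Φ(P))·(1 + log(1/π₀))² and every û ∈ V̂, (1/2)·Σ_{v̂∈V̂} |P̂^t(û,v̂) − π̂(v̂)| ≤ 1/4. -/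

import Mathlib

/-!
Write `n = |V|`, `Φ` for the conductance and `q` for the off-diagonal ergodic flow `π u * P u v`.

The lifting simulates an expander on `V` that mixes in `k = O(log n)` steps. As expander serves the
de Bruijn walk `v ⟶ 2 v + b` on residues modulo `n` with a random bit `b` (`exists_deBruijn`): it is
doubly stochastic, has two outgoing edges per vertex, and its `k`-th power is entrywise at least
`1 / (2 n)` once `n ≤ 2 ^ k`.

Every expander edge is simulated by a bundle of weighted walks in the graph of `q`. By linear
programming duality (`exists_fractional`), routing the `2 n` expander edges with congestion `Λ`
along walks of length at most `L`, where `Λ, L = O(log (1 / π₀) / Φ)`, reduces to the dual statement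
`exists_cheap_walks`: for all edge costs `c`, the ends of the expander edges are joined by walks
with at most `L` steps whose average cost is at most `Λ ∑ c q`. The costs and the number of steps
are combined into one integer length. Region growing (`exists_core`) then finds a ball of small radius
that contains a quarter of the mass, and from every set of vertices half of the mass escapes within
length `O(1 / Φ)` until the ball is met (`escape_half`, `escape`), both by the conductance
bound and a discrete coarea inequality. The fractional routing is a point in the convex hull of
vectors with `2 n + |E|` coordinates, so by Carathéodory's theorem `2 n + |E| + 1` walks suffice;
this gives the bound on the size of the lifting.

The lifted chain (`LiftData.chain`) has a hub over each vertex, a copy of each trajectory, and a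
residual copy of `V`. A hub starts a random trajectory to the hub of the next vertex of the expander
walk; the residual copy carries the flow of `P` that is not used by the trajectories; and with
probability `ρ` of order `1 / (L k)` in each step the chain resets to the hub or the residual copy
over its present vertex. The stationary distribution is explicit, and the low congestion leaves room
for a positive residual flow because a hub mass of order `1 / (K L)` is used. The probability
`theta` of choosing the hub in a reset is bounded below in terms of `K` only, so within time of
order `L k` a reset to a hub followed by `k` uninterrupted trajectories has probability bounded below.
This is a Doeblin minorization (`exists_minorant`, `doeblin`), which yields the mixing bound.
-/

/-- A matrix is row-stochastic: nonnegative entries and each row sums to 1. -/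
def RowStochastic {W : Type*} [Fintype W] (P : Matrix W W ℝ) : Prop :=
  (∀ i j, 0 ≤ P i j) ∧ ∀ i, ∑ j, P i j = 1

/-- `π` is a stationary distribution for `P`: `πᵀP = πᵀ`. -/
def Stationary {W : Type*} [Fintype W] (P : Matrix W W ℝ) (π : W → ℝ) : Prop :=
  ∀ j, ∑ i, π i * P i j = π j

/-- The conductance `Φ(P)` of a chain `P` with stationary distribution `π`:
the minimum over nonempty proper subsets `S` of
`(Σ_{i∈S, j∉S} π_i P_{ij}) / (π(S)·π(Sᶜ))`. -/
noncomputable def conductance {V : Type*} [Fintype V] [DecidableEq V]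
    (P : Matrix V V ℝ) (π : V → ℝ) : ℝ :=
  sInf {x : ℝ | ∃ S : Finset V, S.Nonempty ∧ S ≠ Finset.univ ∧
    x = (∑ i ∈ S, ∑ j ∈ Sᶜ, π i * P i j) / ((∑ i ∈ S, π i) * (∑ j ∈ Sᶜ, π j))}

set_option linter.unusedSectionVars false

/-! ### Walks and the metric form of the routing bound -/

/-- The sum of the weights `c` along the steps of a walk. -/
def walkSum {V M : Type*} [AddCommMonoid M] {H : SimpleGraph V} (c : V → V → M) {u v : V}
    (p : H.Walk u v) : M :=
  (p.darts.map fun d => c d.fst d.snd).sum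

section WalkSum

variable {V M : Type*} {H : SimpleGraph V}

lemma walkSum_nil [AddCommMonoid M] (c : V → V → M) (u : V) :
    walkSum c (SimpleGraph.Walk.nil : H.Walk u u) = 0 := by
  simp [walkSum]

lemma walkSum_cons [AddCommMonoid M] (c : V → V → M) {u v w : V} (h : H.Adj u v)
    (p : H.Walk v w) : walkSum c (SimpleGraph.Walk.cons h p) = c u v + walkSum c p := by
  simp [walkSum]

lemma walkSum_append [AddCommMonoid M] (c : V → V → M) {u v w : V} (p : H.Walk u v)
    (p' : H.Walk v w) : walkSum c (p.append p') = walkSum c p + walkSum c p' := by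
  simp [walkSum]

lemma walkSum_reverse [AddCommMonoid M] (c : V → V → M) (hc : ∀ u v, c u v = c v u) {u v : V}
    (p : H.Walk u v) : walkSum c p.reverse = walkSum c p := by
  induction p with
  | nil => simp [walkSum_nil]
  | cons h p ih =>
    rw [SimpleGraph.Walk.reverse_cons, walkSum_append, walkSum_cons, walkSum_cons, walkSum_nil,
      ih, add_comm, add_zero, hc]

lemma walkSum_mapLe [AddCommMonoid M] (c : V → V → M) {H' : SimpleGraph V} (hle : H ≤ H')
    {u v : V} (p : H.Walk u v) : walkSum c (p.mapLe hle) = walkSum c p := by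
  simp [walkSum, Function.comp_def]

lemma length_le_walkSum (N : V → V → ℕ) (hN : ∀ u v, 1 ≤ N u v) {u v : V} (p : H.Walk u v) :
    p.length ≤ walkSum N p := by
  induction p with
  | nil => simp
  | @cons a b _ h p ih =>
    rw [walkSum_cons, SimpleGraph.Walk.length_cons]
    have := hN a b
    omega

lemma walkSum_mono (c c' : V → V → ℝ) (h : ∀ u v, c u v ≤ c' u v) {u v : V} (p : H.Walk u v) :
    walkSum c p ≤ walkSum c' p := by
  induction p with
  | nil => simp [walkSum_nil]
  | cons h' p ih => rw [walkSum_cons, walkSum_cons]; exact add_le_add (h _ _) ih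

lemma walkSum_le_nat (c : V → V → ℝ) (N : V → V → ℕ) (a : ℝ) (h : ∀ u v, c u v ≤ a * N u v)
    {u v : V} (p : H.Walk u v) : walkSum c p ≤ a * (walkSum N p : ℕ) := by
  induction p with
  | nil => simp [walkSum_nil]
  | cons h' p ih =>
    rw [walkSum_cons, walkSum_cons]
    push_cast
    rw [mul_add]
    exact add_le_add (h _ _) ih

end WalkSum

section Metric

variable {V : Type} [Fintype V] [DecidableEq V]

/-- A symmetric capacity function `q` on `V`, without loops, carried by the graph `H`, of total
capacity at most `π u / 2` at each vertex `u`, and of conductance at least `Φ` with respect to the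
probability distribution `π`. -/
structure Network (q : V → V → ℝ) (π : V → ℝ) (Φ : ℝ) (H : SimpleGraph V) : Prop where
  nonneg : ∀ u v, 0 ≤ q u v
  symm : ∀ u v, q u v = q v u
  adj : ∀ u v, H.Adj u v ↔ q u v ≠ 0
  row : ∀ u, ∑ v, q u v ≤ π u / 2
  pos : ∀ u, 0 < π u
  total : ∑ u, π u = 1
  phi_pos : 0 < Φ
  expand : ∀ S : Finset V, Φ * ((∑ i ∈ S, π i) * ∑ j ∈ Sᶜ, π j) ≤ ∑ i ∈ S, ∑ j ∈ Sᶜ, q i j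

open Classical in
/-- The vertices from which some vertex of `T` is reached by a walk of `N`-length at most `r`. -/
noncomputable def nbhd (H : SimpleGraph V) (N : V → V → ℕ) (T : Finset V) (r : ℕ) : Finset V :=
  Finset.univ.filter fun v => ∃ t ∈ T, ∃ p : H.Walk v t, walkSum N p ≤ r

lemma mem_nbhd {H : SimpleGraph V} {N : V → V → ℕ} {T : Finset V} {r : ℕ} {v : V} :
    v ∈ nbhd H N T r ↔ ∃ t ∈ T, ∃ p : H.Walk v t, walkSum N p ≤ r := by
  simp [nbhd]

lemma nbhd_mono (H : SimpleGraph V) (N : V → V → ℕ) (T : Finset V) : Monotone (nbhd H N T) := by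
  intro r r' h v hv
  rw [mem_nbhd] at hv ⊢
  obtain ⟨t, ht, p, hp⟩ := hv
  exact ⟨t, ht, p, hp.trans h⟩

lemma subset_nbhd (H : SimpleGraph V) (N : V → V → ℕ) (T : Finset V) (r : ℕ) :
    T ⊆ nbhd H N T r := by
  intro v hv
  rw [mem_nbhd]
  exact ⟨v, hv, SimpleGraph.Walk.nil, by simp [walkSum_nil]⟩

lemma nbhd_shift {H : SimpleGraph V} {N : V → V → ℕ} {T : Finset V} {r : ℕ} {u v : V}
    (h : H.Adj u v) (hv : v ∈ nbhd H N T r) : u ∈ nbhd H N T (r + N u v) := by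
  rw [mem_nbhd] at hv ⊢
  obtain ⟨t, ht, p, hp⟩ := hv
  exact ⟨t, ht, SimpleGraph.Walk.cons h p, by rw [walkSum_cons]; omega⟩

/-- Discrete coarea inequality: an increasing family of sets crosses the pair `(u, v)` at most
`N u v` times, so its cuts have total capacity at most the total volume `∑ N q`. -/
lemma coarea (B : ℕ → Finset V) (hB : Monotone B) (q : V → V → ℝ) (hq : ∀ u v, 0 ≤ q u v)
    (N : V → V → ℕ) (hs : ∀ u v r, q u v ≠ 0 → v ∈ B r → u ∈ B (r + N u v)) (R : ℕ) :
    ∑ r ∈ Finset.range R, ∑ u ∈ (B r)ᶜ, ∑ v ∈ B r, q u v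
      ≤ ∑ u ∈ (B 0)ᶜ, ∑ v ∈ B R, N u v * q u v := by
  classical
  have e1 : ∀ r, ∑ u ∈ (B r)ᶜ, ∑ v ∈ B r, q u v
      = ∑ u, ∑ v, if u ∉ B r ∧ v ∈ B r then q u v else 0 := by
    intro r
    rw [← Finset.sum_filter_add_sum_filter_not Finset.univ (fun u => u ∉ B r)]
    have : (Finset.univ.filter fun u => u ∉ B r) = (B r)ᶜ := by ext; simp
    rw [this]
    have h2 : ∑ x ∈ Finset.univ.filter (fun u => ¬ (u ∉ B r)),
        ∑ v, (if x ∉ B r ∧ v ∈ B r then q x v else 0) = 0 := by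
      apply Finset.sum_eq_zero
      intro u hu
      apply Finset.sum_eq_zero
      intro v _
      simp at hu
      simp [hu]
    rw [h2, add_zero]
    apply Finset.sum_congr rfl
    intro u hu
    rw [Finset.mem_compl] at hu
    simp [hu, Finset.sum_ite_mem]
  have e2 : ∑ u ∈ (B 0)ᶜ, ∑ v ∈ B R, N u v * q u v
      = ∑ u, ∑ v, if u ∉ B 0 ∧ v ∈ B R then N u v * q u v else 0 := by
    simp_rw [ite_and, Finset.sum_ite_irrel, Finset.sum_ite_mem, Finset.univ_inter,
      Finset.sum_const_zero]
    rw [← Finset.sum_filter]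
    congr 1
    ext; simp
  simp_rw [e1]
  rw [e2, Finset.sum_comm]
  apply Finset.sum_le_sum
  intro u _
  rw [Finset.sum_comm]
  apply Finset.sum_le_sum
  intro v _
  rw [← Finset.sum_filter, Finset.sum_const, nsmul_eq_mul]
  by_cases hne : (Finset.filter (fun r => u ∉ B r ∧ v ∈ B r) (Finset.range R)).Nonempty
  · obtain ⟨r₁, hr₁⟩ := hne
    simp only [Finset.mem_filter, Finset.mem_range] at hr₁
    rw [if_pos ⟨fun h => hr₁.2.1 (hB (Nat.zero_le _) h), hB hr₁.1.le hr₁.2.2⟩]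
    by_cases hq0 : q u v = 0
    · simp [hq0]
    apply mul_le_mul_of_nonneg_right _ (hq u v)
    have hex : ∃ r, v ∈ B r := ⟨r₁, hr₁.2.2⟩
    have hsub : Finset.filter (fun r => u ∉ B r ∧ v ∈ B r) (Finset.range R)
        ⊆ Finset.Ico (Nat.find hex) (Nat.find hex + N u v) := by
      intro r hr
      simp only [Finset.mem_filter] at hr
      rw [Finset.mem_Ico]
      refine ⟨Nat.find_min' hex hr.2.2, ?_⟩
      by_contra hcon
      push Not at hcon
      exact hr.2.1 (hB hcon (hs u v _ hq0 (Nat.find_spec hex)))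
    have := Finset.card_le_card hsub
    rw [Nat.card_Ico] at this
    exact_mod_cast (by omega)
  · rw [Finset.not_nonempty_iff_eq_empty] at hne
    rw [hne]
    have := hq u v
    simp only [Finset.card_empty, Nat.cast_zero, zero_mul]
    split_ifs <;> positivity

variable {q : V → V → ℝ} {π : V → ℝ} {Φ : ℝ} {H : SimpleGraph V}

lemma Network.compl_sum (net : Network q π Φ H) (S : Finset V) :
    ∑ i ∈ Sᶜ, π i = 1 - ∑ i ∈ S, π i := by
  rw [← net.total, ← Finset.sum_add_sum_compl S π]; ring

lemma Network.sum_nonneg (net : Network q π Φ H) (S : Finset V) : 0 ≤ ∑ i ∈ S, π i :=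
  Finset.sum_nonneg fun i _ => (net.pos i).le

lemma Network.sum_mono (net : Network q π Φ H) {S T : Finset V} (h : S ⊆ T) :
    ∑ i ∈ S, π i ≤ ∑ i ∈ T, π i :=
  Finset.sum_le_sum_of_subset_of_nonneg h fun i _ _ => (net.pos i).le

/-- At least half of a set `S` that misses a quarter of the mass leaves `S` along walks with
`O(1/Φ)` steps and of `c`-cost `O(Z/(Φ π(S)))`. Indeed, otherwise the neighbourhoods of the
complement of `S`, for the length `1 + c π(S)/Z`, would have too many large cuts. -/
lemma escape_half (net : Network q π Φ H) (c : V → V → ℝ) (hc : ∀ u v, 0 ≤ c u v) (Z : ℝ)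
    (hZ : 0 < Z) (hcZ : ∑ u, ∑ v, c u v * q u v ≤ 2 * Z) (h : ℕ) (hh : 24 < h * Φ)
    (B₀ : Finset V) (hB₀ : 1 / 4 ≤ ∑ i ∈ B₀, π i) (S : Finset V) (hS : S.Nonempty)
    (hSB : S ⊆ B₀ᶜ) :
    ∃ S' ⊆ S, 2 * ∑ i ∈ S', π i ≤ ∑ i ∈ S, π i ∧ ∀ v ∈ S, v ∉ S' → ∃ t, t ∉ S ∧
      ∃ p : H.Walk v t, p.length ≤ h ∧ walkSum c p ≤ h * Z / ∑ i ∈ S, π i := by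
  have hm : 0 < ∑ i ∈ S, π i := Finset.sum_pos (fun i _ => net.pos i) hS
  set m := ∑ i ∈ S, π i with hmdef
  set N : V → V → ℕ := fun u v => ⌈c u v * m / Z⌉₊ + 1 with hN
  have hN1 : ∀ u v, c u v ≤ Z / m * N u v := by
    intro u v
    have := Nat.le_ceil (c u v * m / Z)
    rw [div_mul_eq_mul_div, le_div_iff₀ hm]
    have h2 : c u v * m / Z ≤ (N u v : ℝ) := by simp only [hN]; push_cast; linarith
    rw [div_le_iff₀ hZ] at h2
    linarith
  have hN2 : ∀ u v, (N u v : ℝ) ≤ c u v * m / Z + 2 := by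
    intro u v
    have h0 : 0 ≤ c u v * m / Z := by have := hc u v; positivity
    have := Nat.ceil_lt_add_one h0
    simp only [hN]; push_cast; linarith
  set B := nbhd H N Sᶜ with hBdef
  have hBmono : Monotone B := nbhd_mono H N Sᶜ
  have hSc : ∀ r, Sᶜ ⊆ B r := fun r => subset_nbhd H N Sᶜ r
  have hBS : ∀ r, (B r)ᶜ ⊆ S := by
    intro r
    have := Finset.compl_subset_compl.mpr (hSc r)
    rwa [compl_compl] at this
  refine ⟨(B h)ᶜ, hBS h, ?_, ?_⟩
  · by_contra hcon
    push Not at hcon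
    have hcut : ∀ r ∈ Finset.range h, Φ * m / 8 ≤ ∑ u ∈ (B r)ᶜ, ∑ v ∈ B r, q u v := by
      intro r hr
      have h1 := net.expand (B r)ᶜ
      rw [compl_compl] at h1
      have h2 : m / 2 ≤ ∑ i ∈ (B r)ᶜ, π i := by
        have := net.sum_mono (Finset.compl_subset_compl.mpr
          (hBmono (Finset.mem_range.mp hr).le))
        linarith
      have h3 : 1 / 4 ≤ ∑ i ∈ B r, π i := by
        refine hB₀.trans (net.sum_mono (subset_trans ?_ (hSc r)))
        have := Finset.compl_subset_compl.mpr hSB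
        rwa [compl_compl] at this
      have h4 : m / 2 * (1 / 4) ≤ (∑ i ∈ (B r)ᶜ, π i) * ∑ i ∈ B r, π i :=
        mul_le_mul h2 h3 (by norm_num) (by linarith)
      have := mul_le_mul_of_nonneg_left h4 net.phi_pos.le
      linarith
    have hsum := Finset.sum_le_sum hcut
    rw [Finset.sum_const, Finset.card_range, nsmul_eq_mul] at hsum
    have hco := coarea B hBmono q net.nonneg N
      (fun u v r hq hv => nbhd_shift ((net.adj u v).mpr hq) hv) h
    have hup : ∑ u ∈ (B 0)ᶜ, ∑ v ∈ B h, N u v * q u v ≤ 3 * m := by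
      calc ∑ u ∈ (B 0)ᶜ, ∑ v ∈ B h, N u v * q u v
          ≤ ∑ u ∈ S, ∑ v, N u v * q u v := by
            have hnn : ∀ u v, 0 ≤ (N u v : ℝ) * q u v := fun u v =>
              mul_nonneg (Nat.cast_nonneg _) (net.nonneg u v)
            refine (Finset.sum_le_sum fun u _ => Finset.sum_le_univ_sum_of_nonneg (hnn u)).trans ?_
            exact Finset.sum_le_sum_of_subset_of_nonneg (hBS 0) fun u _ _ =>
              Finset.sum_nonneg fun v _ => hnn u v
        _ ≤ ∑ u ∈ S, ∑ v, (m / Z * (c u v * q u v) + 2 * q u v) := by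
            refine Finset.sum_le_sum fun u _ => Finset.sum_le_sum fun v _ => ?_
            have := mul_le_mul_of_nonneg_right (hN2 u v) (net.nonneg u v)
            refine this.trans (le_of_eq ?_)
            ring
        _ = m / Z * ∑ u ∈ S, ∑ v, c u v * q u v + 2 * ∑ u ∈ S, ∑ v, q u v := by
            simp_rw [Finset.sum_add_distrib, Finset.mul_sum]
        _ ≤ m / Z * (2 * Z) + 2 * ∑ u ∈ S, π u / 2 := by
            gcongr with u hu
            · refine le_trans ?_ hcZ
              exact Finset.sum_le_univ_sum_of_nonneg fun u =>
                Finset.sum_nonneg fun v _ => mul_nonneg (hc u v) (net.nonneg u v)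
            · exact net.row u
        _ = 3 * m := by
            rw [← Finset.sum_div, ← hmdef]; field_simp; norm_num
    have : (h : ℝ) * (Φ * m / 8) ≤ 3 * m := hsum.trans (hco.trans hup)
    have h5 : 24 * m < h * Φ * m := mul_lt_mul_of_pos_right hh hm
    linarith
  · intro v hv hv'
    rw [Finset.mem_compl, not_not, hBdef, mem_nbhd] at hv'
    obtain ⟨t, ht, p, hp⟩ := hv'
    refine ⟨t, by simpa using ht, p, ?_, ?_⟩
    · exact (length_le_walkSum N (fun u v => by simp [hN]) p).trans hp
    · refine (walkSum_le_nat c N (Z / m) hN1 p).trans ?_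
      have : ((walkSum N p : ℕ) : ℝ) ≤ h := by exact_mod_cast hp
      calc Z / m * (walkSum N p : ℕ) ≤ Z / m * h := by gcongr
        _ = h * Z / m := by ring

/-- Iterating `escape_half` over `k` dyadic scales of mass. -/
lemma escape (net : Network q π Φ H) (c : V → V → ℝ) (hc : ∀ u v, 0 ≤ c u v) (Z : ℝ)
    (hZ : 0 < Z) (hcZ : ∑ u, ∑ v, c u v * q u v ≤ 2 * Z) (h : ℕ) (hh : 24 < h * Φ)
    (B₀ : Finset V) (hB₀ : 1 / 4 ≤ ∑ i ∈ B₀, π i) (π₀ : ℝ) (hπ₀ : ∀ i, π₀ ≤ π i) (k : ℕ) :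
    ∀ S : Finset V, S ⊆ B₀ᶜ → ∑ i ∈ S, π i < 2 ^ k * π₀ →
    ∃ F : V → ℝ, (∀ v, 0 ≤ F v) ∧ ∑ v ∈ S, π v * F v ≤ k * h * Z ∧
      ∀ v ∈ S, ∃ t, t ∉ S ∧ ∃ p : H.Walk v t, p.length ≤ k * h ∧ walkSum c p ≤ F v := by
  induction k with
  | zero =>
    intro S _ hlt
    have hS : S = ∅ := by
      by_contra hne
      obtain ⟨i, hi⟩ := Finset.nonempty_iff_ne_empty.mpr hne
      have := Finset.single_le_sum (f := π) (fun i _ => (net.pos i).le) hi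
      have := hπ₀ i
      simp at hlt
      linarith
    subst hS
    exact ⟨fun _ => 0, by simp, by simp, by simp⟩
  | succ k ih =>
    intro S hSB hlt
    by_cases hS : S.Nonempty
    swap
    · rw [Finset.not_nonempty_iff_eq_empty] at hS
      subst hS
      exact ⟨fun _ => 0, by simp, by simp; positivity, by simp⟩
    obtain ⟨S', hS'S, hhalf, hesc⟩ := escape_half net c hc Z hZ hcZ h hh B₀ hB₀ S hS hSB
    have hm : 0 < ∑ i ∈ S, π i := Finset.sum_pos (fun i _ => net.pos i) hS
    obtain ⟨F', hF'0, hF's, hF'w⟩ := ih S' (hS'S.trans hSB) (by rw [pow_succ] at hlt; linarith)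
    have ha : 0 ≤ h * Z / ∑ i ∈ S, π i := by positivity
    refine ⟨fun v => (if v ∈ S' then F' v else 0) + h * Z / ∑ i ∈ S, π i, ?_, ?_, ?_⟩
    · intro v
      refine add_nonneg ?_ ha
      split_ifs
      exacts [hF'0 v, le_rfl]
    · simp_rw [mul_add, Finset.sum_add_distrib, mul_ite, mul_zero]
      rw [Finset.sum_ite_mem, Finset.inter_eq_right.mpr hS'S, ← Finset.sum_mul]
      rw [mul_div_cancel₀ _ hm.ne']
      push_cast
      linarith
    · intro v hv
      by_cases hv' : v ∈ S'
      · obtain ⟨t, ht, p, hp1, hp2⟩ := hF'w v hv'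
        simp only [hv', if_true]
        by_cases htS : t ∈ S
        · obtain ⟨t', ht', p', hp1', hp2'⟩ := hesc t htS ht
          refine ⟨t', ht', p.append p', ?_, ?_⟩
          · rw [SimpleGraph.Walk.length_append, Nat.succ_mul]; omega
          · rw [walkSum_append]; linarith
        · refine ⟨t, htS, p, ?_, by linarith⟩
          rw [Nat.succ_mul]; omega
      · obtain ⟨t, ht, p, hp1, hp2⟩ := hesc v hv hv'
        refine ⟨t, ht, p, ?_, ?_⟩
        · rw [Nat.succ_mul]; omega
        · simp only [hv', if_false]; linarith

/-- Region growing: if the lengths `N` have bounded total volume, then some ball of radius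
`R = O(log(1/π₀)/Φ)` contains a quarter of the mass. A set `U` that is maximal among those of mass
at most `1/2` with small cut relative to mass plus volume must have mass below `1/4`; every ball
around a vertex `z ∉ U` inside the complement of `U` then has a cut proportional to the volume
absorbed so far, so that this volume grows geometrically until the ball is large. -/
lemma exists_core (net : Network q π Φ H) (N : V → V → ℕ)
    (hN : ∑ u, ∑ v, N u v * q u v ≤ 3) (π₀ : ℝ) (hπ₀ : ∀ i, π₀ ≤ π i) (hπ₀1 : π₀ ≤ 1)
    (R : ℕ) (hR : 4 < π₀ * (1 + Φ / 32) ^ R) :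
    ∃ (z : V) (B₀ : Finset V), 1 / 4 ≤ ∑ i ∈ B₀, π i ∧
      ∀ v ∈ B₀, ∃ p : H.Walk v z, walkSum N p ≤ R := by
  classical
  set κ := Φ / 32 with hκ
  have hκ0 : 0 < κ := by have := net.phi_pos; positivity
  have hNq : ∀ u v, 0 ≤ (N u v : ℝ) * q u v := fun u v =>
    mul_nonneg (Nat.cast_nonneg _) (net.nonneg u v)
  -- the volume of the edges that touch `U`
  set vol : Finset V → ℝ := fun U =>
    ∑ u, ∑ v, if u ∈ U ∨ v ∈ U then (N u v : ℝ) * q u v else 0 with hvol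
  have hvol3 : ∀ U, vol U ≤ 3 := by
    intro U
    refine le_trans ?_ hN
    refine Finset.sum_le_sum fun u _ => Finset.sum_le_sum fun v _ => ?_
    split_ifs
    exacts [le_rfl, hNq u v]
  set good : Finset V → Prop := fun U => ∑ i ∈ U, π i ≤ 1 / 2 ∧
    ∑ i ∈ U, ∑ j ∈ Uᶜ, q i j ≤ κ * (∑ i ∈ U, π i + vol U) with hgood
  have hempty : good ∅ := by
    simp [hgood, hvol]
  obtain ⟨U, hU⟩ := Finset.exists_maximal (s := Finset.univ.filter good) ⟨∅, by simp [hempty]⟩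
  have hUg : good U := by simpa using hU.prop
  have hUmax : ∀ U', good U' → U ⊆ U' → U' ⊆ U := fun U' h h' =>
    hU.le_of_ge (by simpa using h) h'
  have hUsmall : ∑ i ∈ U, π i < 1 / 4 := by
    by_contra hcon
    push Not at hcon
    have h1 := net.expand U
    rw [net.compl_sum] at h1
    have h2 : 1 / 8 ≤ (∑ i ∈ U, π i) * (1 - ∑ i ∈ U, π i) := by
      have := hUg.1
      nlinarith
    have h3 := mul_le_mul_of_nonneg_left h2 net.phi_pos.le
    have h4 := hUg.2
    have h5 : κ * (∑ i ∈ U, π i + vol U) ≤ κ * (7 / 2) := by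
      apply mul_le_mul_of_nonneg_left _ hκ0.le
      have := hUg.1; have := hvol3 U; linarith
    have := net.phi_pos
    linarith
  obtain ⟨z, hz⟩ : ∃ z, z ∉ U := by
    by_contra hcon
    push Not at hcon
    rw [Finset.eq_univ_iff_forall.mpr hcon, net.total] at hUsmall
    norm_num at hUsmall
  -- the graph induced on the complement of `U`
  let H' : SimpleGraph V :=
    { Adj := fun u v => H.Adj u v ∧ u ∉ U ∧ v ∉ U
      symm := ⟨fun u v h => ⟨h.1.symm, h.2.2, h.2.1⟩⟩
      loopless := ⟨fun u h => h.1.ne rfl⟩ }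
  have hH'H : H' ≤ H := fun u v h => h.1
  set B := nbhd H' N {z} with hBdef
  have hBmono : Monotone B := nbhd_mono H' N {z}
  have hBU : ∀ r v, v ∈ B r → v ∉ U := by
    intro r v hv
    rw [hBdef, mem_nbhd] at hv
    obtain ⟨t, ht, p, -⟩ := hv
    rw [Finset.mem_singleton] at ht
    subst ht
    cases p with
    | nil => exact hz
    | cons h p => exact h.2.1
  have hzB : ∀ r, z ∈ B r := fun r => subset_nbhd H' N {z} r (by simp)
  refine ⟨z, B R, ?_, ?_⟩
  swap
  · intro v hv
    rw [hBdef, mem_nbhd] at hv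
    obtain ⟨t, ht, p, hp⟩ := hv
    rw [Finset.mem_singleton] at ht
    subst ht
    exact ⟨p.mapLe hH'H, by rwa [walkSum_mapLe]⟩
  by_contra hcon
  push Not at hcon
  -- capacities inside the complement of `U`
  set q' : V → V → ℝ := fun u v => if u ∉ U ∧ v ∉ U then q u v else 0 with hq'
  have hq'0 : ∀ u v, 0 ≤ q' u v := by
    intro u v
    simp only [hq']
    split_ifs
    exacts [net.nonneg u v, le_rfl]
  set cut : ℕ → ℝ := fun r => ∑ u ∈ (B r)ᶜ, ∑ v ∈ B r, q' u v with hcut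
  have hco : ∀ r, ∑ s ∈ Finset.range r, cut s ≤ ∑ u ∈ (B 0)ᶜ, ∑ v ∈ B r, N u v * q' u v := by
    intro r
    apply coarea B hBmono q' hq'0 N
    intro u v r hne hv
    simp only [hq', ne_eq, ite_eq_right_iff, Classical.not_imp] at hne
    exact nbhd_shift (H := H') ⟨(net.adj u v).mpr hne.2, hne.1⟩ hv
  have hvolB : ∀ r, vol U + ∑ u ∈ (B 0)ᶜ, ∑ v ∈ B r, N u v * q' u v ≤ vol (U ∪ B r) := by
    intro r
    have : ∑ u ∈ (B 0)ᶜ, ∑ v ∈ B r, N u v * q' u v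
        ≤ ∑ u, ∑ v, if v ∈ B r then N u v * q' u v else 0 := by
      simp_rw [Finset.sum_ite_mem, Finset.univ_inter]
      exact Finset.sum_le_univ_sum_of_nonneg fun u => Finset.sum_nonneg fun v _ =>
        mul_nonneg (Nat.cast_nonneg _) (hq'0 u v)
    refine (add_le_add_right this (vol U)).trans ?_
    simp only [hvol]
    simp_rw [← Finset.sum_add_distrib]
    refine Finset.sum_le_sum fun u _ => Finset.sum_le_sum fun v _ => ?_
    have h0 := hNq u v
    simp only [hq', Finset.mem_union]
    by_cases h1 : u ∈ U <;> by_cases h2 : v ∈ U <;> by_cases h3 : v ∈ B r <;>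
      simp [h1, h2, h3]
    split_ifs <;> simp [h0]
  have hcutU : ∀ r, ∑ i ∈ U ∪ B r, ∑ j ∈ (U ∪ B r)ᶜ, q i j
      ≤ ∑ i ∈ U, ∑ j ∈ Uᶜ, q i j + cut r := by
    intro r
    have hd : Disjoint U (B r) := by
      rw [Finset.disjoint_left]
      exact fun v hv hv' => hBU r v hv' hv
    rw [Finset.sum_union hd]
    apply add_le_add
    · refine Finset.sum_le_sum fun i _ => Finset.sum_le_sum_of_subset_of_nonneg ?_
        fun j _ _ => net.nonneg i j
      exact Finset.compl_subset_compl.mpr Finset.subset_union_left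
    · simp only [hcut]
      rw [Finset.sum_comm' (s := (B r)ᶜ) (t := fun _ => B r) (t' := B r) (s' := fun _ => (B r)ᶜ)
        (by intros; tauto)]
      refine Finset.sum_le_sum fun i hi => ?_
      have : ∀ j ∈ (U ∪ B r)ᶜ, q i j = q' j i := by
        intro j hj
        simp only [Finset.mem_compl, Finset.mem_union, not_or] at hj
        simp only [hq']
        rw [if_pos ⟨hj.1, hBU r i hi⟩, net.symm]
      rw [Finset.sum_congr rfl this]
      refine Finset.sum_le_sum_of_subset_of_nonneg ?_ fun j _ _ => hq'0 j i
      exact Finset.compl_subset_compl.mpr Finset.subset_union_right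
  have hgrow : ∀ r ≤ R, κ * (π₀ + ∑ s ∈ Finset.range r, cut s) ≤ cut r := by
    intro r hr
    by_contra hlt
    push Not at hlt
    have hd : Disjoint U (B r) := by
      rw [Finset.disjoint_left]
      exact fun v hv hv' => hBU r v hv' hv
    have hBr : ∑ i ∈ B r, π i < 1 / 4 := (net.sum_mono (hBmono hr)).trans_lt hcon
    have hπB : π₀ ≤ ∑ i ∈ B r, π i := (hπ₀ z).trans
      (Finset.single_le_sum (f := π) (fun i _ => (net.pos i).le) (hzB r))
    have hg : good (U ∪ B r) := by
      refine ⟨?_, ?_⟩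
      · rw [Finset.sum_union hd]; linarith
      · have hπU := Finset.sum_union hd (f := π)
        rw [hπU]
        have h1 := hcutU r
        have h2 := hUg.2
        have h3 : κ * (π₀ + ∑ s ∈ Finset.range r, cut s)
            ≤ κ * (∑ i ∈ B r, π i + (vol (U ∪ B r) - vol U)) := by
          apply mul_le_mul_of_nonneg_left _ hκ0.le
          have := hco r; have := hvolB r; linarith
        have h4 : κ * (∑ i ∈ U, π i + ∑ i ∈ B r, π i + vol (U ∪ B r))
          = κ * (∑ i ∈ U, π i + vol U) + κ * (∑ i ∈ B r, π i + (vol (U ∪ B r) - vol U)) := by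
          ring
        linarith
    exact hBU r z (hzB r) (hUmax _ hg Finset.subset_union_left
      (Finset.mem_union_right _ (hzB r)))
  have hpow : ∀ r ≤ R, π₀ * (1 + κ) ^ r ≤ π₀ + ∑ s ∈ Finset.range r, cut s := by
    intro r
    induction r with
    | zero => intro _; simp
    | succ r ih =>
      intro hr
      have h1 := ih (by omega)
      have h2 := hgrow r (by omega)
      have h3 := mul_le_mul_of_nonneg_left h1 hκ0.le
      rw [Finset.sum_range_succ, pow_succ]
      linarith
  have h1 := hpow R le_rfl
  have h2 := hco R
  have h3 := hvolB R
  have h4 := hvol3 (U ∪ B R)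
  have h5 : 0 ≤ vol U := Finset.sum_nonneg fun u _ => Finset.sum_nonneg fun v _ => by
    have := hNq u v
    split_ifs
    exacts [this, le_rfl]
  linarith

/-- The dual form of the routing theorem: for every edge cost `c` of total volume at most `Z`, the
commodities `v ⟶ σ b v` can be joined by walks with at most `2 k h + 2 R` steps and of average cost
at most `(2 K k h + 2 R) Z`. Each walk passes through the core given by `exists_core`. -/
lemma exists_cheap_walks (net : Network q π Φ H) (K : ℝ) (hK : ∀ v, 1 ≤ K * π v * Fintype.card V)
    (hK0 : 0 ≤ K)
    (σ : Bool → V → V) (hσ : ∀ F : V → ℝ, ∑ d : V × Bool, F (σ d.2 d.1) = 2 * ∑ v, F v)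
    (π₀ : ℝ) (hπ₀ : ∀ i, π₀ ≤ π i) (hπ₀1 : π₀ ≤ 1) (hπ₀0 : 0 < π₀) (R h k : ℕ)
    (hR : 4 < π₀ * (1 + Φ / 32) ^ R) (hh : 24 < h * Φ) (hk : 1 < 2 ^ k * π₀)
    (c : V → V → ℝ) (hc : ∀ u v, 0 ≤ c u v) (Z : ℝ) (hZ : 0 < Z)
    (hcZ : ∑ u, ∑ v, c u v * q u v ≤ Z) :
    ∃ p : ∀ d : V × Bool, H.Walk d.1 (σ d.2 d.1),
      (∀ d, (p d).length ≤ 2 * (k * h) + 2 * R) ∧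
      ∑ d, walkSum c (p d) ≤ (2 * Fintype.card V) * ((2 * K * (k * h) + 2 * R) * Z) := by
  have hV : 0 < (Fintype.card V : ℝ) := by
    have : Nonempty V := by
      by_contra hne
      rw [not_nonempty_iff] at hne
      have := net.total
      simp at this
    exact_mod_cast Fintype.card_pos
  set c' : V → V → ℝ := fun u v => c u v + c v u with hc'
  have hc'0 : ∀ u v, 0 ≤ c' u v := fun u v => add_nonneg (hc u v) (hc v u)
  have hc's : ∀ u v, c' u v = c' v u := fun u v => add_comm _ _
  have hc'Z : ∑ u, ∑ v, c' u v * q u v ≤ 2 * Z := by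
    have h1 : ∑ u, ∑ v, c v u * q u v = ∑ u, ∑ v, c u v * q u v := by
      rw [Finset.sum_comm]
      refine Finset.sum_congr rfl fun u _ => Finset.sum_congr rfl fun v _ => ?_
      rw [net.symm]
    simp only [hc', add_mul, Finset.sum_add_distrib]
    rw [h1]; linarith
  set N : V → V → ℕ := fun u v => ⌈c' u v / Z⌉₊ + 1 with hN
  have hNs : ∀ u v, N u v = N v u := fun u v => by simp only [hN]; rw [hc's]
  have hN1 : ∀ u v, c' u v ≤ Z * N u v := by
    intro u v
    have := Nat.le_ceil (c' u v / Z)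
    have h2 : c' u v / Z ≤ (N u v : ℝ) := by simp only [hN]; push_cast; linarith
    rw [div_le_iff₀ hZ] at h2
    linarith
  have hN2 : ∀ u v, (N u v : ℝ) ≤ c' u v / Z + 2 := by
    intro u v
    have h0 : 0 ≤ c' u v / Z := by have := hc'0 u v; positivity
    have := Nat.ceil_lt_add_one h0
    simp only [hN]; push_cast; linarith
  have hNvol : ∑ u, ∑ v, N u v * q u v ≤ 3 := by
    calc ∑ u, ∑ v, N u v * q u v
        ≤ ∑ u, ∑ v, (1 / Z * (c' u v * q u v) + 2 * q u v) := by
          refine Finset.sum_le_sum fun u _ => Finset.sum_le_sum fun v _ => ?_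
          refine (mul_le_mul_of_nonneg_right (hN2 u v) (net.nonneg u v)).trans (le_of_eq ?_)
          ring
      _ = 1 / Z * ∑ u, ∑ v, c' u v * q u v + 2 * ∑ u, ∑ v, q u v := by
          simp_rw [Finset.sum_add_distrib, Finset.mul_sum]
      _ ≤ 1 / Z * (2 * Z) + 2 * ∑ u, π u / 2 := by
          gcongr with u hu
          exact net.row u
      _ = 3 := by
          rw [← Finset.sum_div, net.total]; field_simp; norm_num
  obtain ⟨z, B₀, hB₀, hcore⟩ := exists_core net N hNvol π₀ hπ₀ hπ₀1 R hR
  obtain ⟨F, hF0, hFs, hFw⟩ := escape net c' hc'0 Z hZ hc'Z h hh B₀ hB₀ π₀ hπ₀ k B₀ᶜ subset_rfl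
    (by rw [net.compl_sum]; linarith)
  have hreach : ∀ v, ∃ p : H.Walk v z, p.length ≤ k * h + R ∧
      walkSum c' p ≤ (if v ∈ B₀ᶜ then F v else 0) + R * Z := by
    have hin : ∀ v ∈ B₀, ∃ p : H.Walk v z, p.length ≤ R ∧ walkSum c' p ≤ R * Z := by
      intro v hv
      obtain ⟨p, hp⟩ := hcore v hv
      refine ⟨p, (length_le_walkSum N (fun u v => by simp [hN]) p).trans hp, ?_⟩
      refine (walkSum_le_nat c' N Z hN1 p).trans ?_
      have : ((walkSum N p : ℕ) : ℝ) ≤ R := by exact_mod_cast hp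
      rw [mul_comm]; gcongr
    intro v
    by_cases hv : v ∈ B₀ᶜ
    · obtain ⟨t, ht, p, hp1, hp2⟩ := hFw v hv
      obtain ⟨p', hp1', hp2'⟩ := hin t (by simpa using ht)
      refine ⟨p.append p', ?_, ?_⟩
      · rw [SimpleGraph.Walk.length_append]; omega
      · rw [walkSum_append, if_pos hv]; linarith
    · obtain ⟨p', hp1', hp2'⟩ := hin v (by simpa using hv)
      exact ⟨p', by omega, by rw [if_neg hv]; linarith⟩
  choose w hw1 hw2 using hreach
  refine ⟨fun d => (w d.1).append (w (σ d.2 d.1)).reverse, ?_, ?_⟩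
  · intro d
    rw [SimpleGraph.Walk.length_append, SimpleGraph.Walk.length_reverse]
    have := hw1 d.1; have := hw1 (σ d.2 d.1); omega
  · set F' : V → ℝ := fun v => (if v ∈ B₀ᶜ then F v else 0) + R * Z with hF'
    have hle : ∀ d : V × Bool, walkSum c ((w d.1).append (w (σ d.2 d.1)).reverse)
        ≤ F' d.1 + F' (σ d.2 d.1) := by
      intro d
      refine (walkSum_mono c c' (fun u v => by simp [hc', hc v u]) _).trans ?_
      rw [walkSum_append, walkSum_reverse _ hc's]
      exact add_le_add (hw2 _) (hw2 _)
    refine (Finset.sum_le_sum fun d _ => hle d).trans ?_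
    rw [Finset.sum_add_distrib, hσ F']
    have h1 : ∑ d : V × Bool, F' d.1 = 2 * ∑ v, F' v := by
      rw [Fintype.sum_prod_type]; simp [Finset.mul_sum, two_mul]
    rw [h1]
    have h2 : ∑ v, F' v = ∑ v ∈ B₀ᶜ, F v + Fintype.card V * (R * Z) := by
      simp only [hF']
      rw [Finset.sum_add_distrib, Finset.sum_ite_mem]
      simp
    have h3 : ∑ v ∈ B₀ᶜ, F v ≤ K * Fintype.card V * (k * h * Z) := by
      calc ∑ v ∈ B₀ᶜ, F v ≤ ∑ v ∈ B₀ᶜ, K * Fintype.card V * (π v * F v) := by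
            refine Finset.sum_le_sum fun v _ => ?_
            have := mul_le_mul_of_nonneg_right (hK v) (hF0 v)
            linarith
        _ = K * Fintype.card V * ∑ v ∈ B₀ᶜ, π v * F v := by rw [Finset.mul_sum]
        _ ≤ _ := by gcongr
    rw [h2]
    linarith

end Metric

/-! ### Linear programming duality and the routing -/

section Duality

/-- Linear programming duality for a fractional choice of routes. Each route `i` serves a commodity
`δ i` and uses `cnt i e` units of the resource `e`. If for every nonnegative price vector `ℓ` there
is a choice of one route per commodity of average price at most that of the capacities, then the
uniform demand can be met within the capacities, and by Carathéodory's theorem few routes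
suffice. -/
lemma exists_fractional {D E : Type} [Fintype D] [Fintype E] [DecidableEq D] [DecidableEq E]
    [Nonempty D] {I : Type} (δ : I → D) (cnt : I → E → ℕ) (B : ℕ) (hB : ∀ i e, cnt i e ≤ B)
    (cap : E → ℝ) (hcap : ∀ e, 0 ≤ cap e)
    (hyp : ∀ ℓ : E → ℝ, (∀ e, 0 ≤ ℓ e) → ∀ Z : ℝ, 0 < Z → ∑ e, ℓ e * cap e ≤ Z →
      ∃ g : D → I, (∀ d, δ (g d) = d) ∧
        ∑ d, ∑ e, ℓ e * (cnt (g d) e : ℝ) ≤ Fintype.card D * Z) :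
    ∃ (J : Type) (_ : Fintype J) (i : J → I) (x : J → ℝ),
      Fintype.card J ≤ Fintype.card D + Fintype.card E + 1 ∧ (∀ j, 0 < x j) ∧
      (∀ d, ∑ j, (if δ (i j) = d then x j else 0) = 1 / Fintype.card D) ∧
      ∀ e, ∑ j, x j * (cnt (i j) e : ℝ) ≤ cap e := by
  classical
  have hD : (0 : ℝ) < Fintype.card D := by exact_mod_cast Fintype.card_pos
  let pt : I → (D ⊕ E → ℝ) := fun i =>
    Sum.elim (fun d => if δ i = d then 1 else 0) (fun e => (cnt i e : ℝ))
  let T : Set (D ⊕ E → ℝ) := {y | (∀ d, y (Sum.inl d) = 1 / Fintype.card D) ∧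
    ∀ e, y (Sum.inr e) ≤ cap e}
  have hfin : (Set.range pt).Finite := by
    apply Set.Finite.subset (s := {y | ∀ a, y a ∈ ((fun m : ℕ => (m : ℝ)) '' Set.Iic (B + 1))})
    · exact Set.Finite.pi' fun a => (Set.finite_Iic _).image _
    · rintro _ ⟨i, rfl⟩ a
      rcases a with d | e
      · by_cases h : δ i = d
        · exact ⟨1, by simp, by simp [pt, h]⟩
        · exact ⟨0, by simp, by simp [pt, h]⟩
      · exact ⟨cnt i e, (hB i e).trans (by omega), by simp [pt]⟩
  have hmeet : (convexHull ℝ (Set.range pt) ∩ T).Nonempty := by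
    by_contra hne
    have hdisj : Disjoint (convexHull ℝ (Set.range pt)) T := by
      rw [Set.disjoint_iff_inter_eq_empty]
      exact Set.not_nonempty_iff_eq_empty.mp hne
    have hTconv : Convex ℝ T := by
      intro y hy z hz a b ha hb hab
      refine ⟨fun d => ?_, fun e => ?_⟩
      · simp only [Pi.add_apply, Pi.smul_apply, smul_eq_mul, hy.1 d, hz.1 d]
        rw [← add_mul, hab, one_mul]
      · simp only [Pi.add_apply, Pi.smul_apply, smul_eq_mul]
        calc a * y (Sum.inr e) + b * z (Sum.inr e) ≤ a * cap e + b * cap e :=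
              add_le_add (mul_le_mul_of_nonneg_left (hy.2 e) ha)
                (mul_le_mul_of_nonneg_left (hz.2 e) hb)
          _ = cap e := by rw [← add_mul, hab, one_mul]
    have hTclosed : IsClosed T := by
      have : T = (⋂ d, {y | y (Sum.inl d) = 1 / (Fintype.card D : ℝ)}) ∩
          ⋂ e, {y | y (Sum.inr e) ≤ cap e} := by
        ext y; simp [T]
      rw [this]
      exact (isClosed_iInter fun d => isClosed_eq (continuous_apply _) continuous_const).inter
        (isClosed_iInter fun e => isClosed_le (continuous_apply _) continuous_const)
    obtain ⟨f, u, v, hfu, huv, hfv⟩ := geometric_hahn_banach_compact_closed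
      (convex_convexHull ℝ (Set.range pt)) (hfin.isCompact_convexHull (𝕜 := ℝ)) hTconv hTclosed hdisj
    set α : D ⊕ E → ℝ := fun a => f (Pi.single a 1) with hα
    have hf : ∀ y, f y = ∑ a, y a * α a := by
      intro y
      conv_lhs => rw [pi_eq_sum_univ' y]
      rw [map_sum]
      refine Finset.sum_congr rfl fun a _ => ?_
      rw [map_smul, smul_eq_mul]
    -- the prices are nonnegative because `T` is unbounded below in each resource coordinate
    have hneg : ∀ e, α (Sum.inr e) ≤ 0 := by
      intro e
      by_contra hpos
      push Not at hpos
      let y₀ : D ⊕ E → ℝ := Sum.elim (fun _ => 1 / Fintype.card D) cap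
      have hy₀ : y₀ ∈ T := ⟨fun d => rfl, fun e => le_rfl⟩
      have h0 := hfv y₀ hy₀
      set t := (f y₀ - v) / α (Sum.inr e) with ht
      have ht0 : 0 < t := div_pos (by linarith) hpos
      have h1 := hfv (y₀ - t • Pi.single (Sum.inr e) 1) ⟨fun d => by simp [y₀], fun e' => by
        have : 0 ≤ t * (Pi.single (M := fun _ => ℝ) (Sum.inr e : D ⊕ E) 1) (Sum.inr e') := by
          apply mul_nonneg ht0.le
          by_cases h : e' = e
          · subst h; simp
          · rw [Pi.single_eq_of_ne (by simpa using h)]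
        simp only [Pi.sub_apply, Pi.smul_apply, smul_eq_mul, y₀, Sum.elim_inr]
        linarith⟩
      rw [map_sub, map_smul, smul_eq_mul, ht] at h1
      change v < f y₀ - (f y₀ - v) / α (Sum.inr e) * α (Sum.inr e) at h1
      rw [div_mul_cancel₀ _ hpos.ne'] at h1
      linarith
    set ℓ : E → ℝ := fun e => -α (Sum.inr e) with hℓ
    have hy := hfv (Sum.elim (fun _ => 1 / Fintype.card D) cap) ⟨fun d => rfl, fun e => le_rfl⟩
    rw [hf] at hy
    simp only [Fintype.sum_sum_type, Sum.elim_inl, Sum.elim_inr] at hy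
    have hcost : 0 ≤ ∑ e, ℓ e * cap e := Finset.sum_nonneg fun e _ =>
      mul_nonneg (by simpa [hℓ] using hneg e) (hcap e)
    obtain ⟨g, hg, hgc⟩ := hyp ℓ (fun e => by simpa [hℓ] using hneg e)
      (∑ e, ℓ e * cap e + (v - u)) (by linarith) (by linarith)
    have hpt : ∀ d, α (Sum.inl d) - ∑ e, ℓ e * (cnt (g d) e : ℝ) < u := by
      intro d
      have := hfu (pt (g d)) (subset_convexHull ℝ _ ⟨g d, rfl⟩)
      rw [hf] at this
      simp only [Fintype.sum_sum_type, pt, Sum.elim_inl, Sum.elim_inr, hg] at this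
      simp only [ite_mul, one_mul, zero_mul, Finset.sum_ite_eq, Finset.mem_univ, if_true] at this
      simp only [hℓ, neg_mul, Finset.sum_neg_distrib]
      simp_rw [mul_comm (α (Sum.inr _))]
      linarith
    have hsum : ∑ d, (α (Sum.inl d) - ∑ e, ℓ e * (cnt (g d) e : ℝ)) < ∑ _d : D, u :=
      Finset.sum_lt_sum_of_nonempty Finset.univ_nonempty fun d _ => hpt d
    rw [Finset.sum_sub_distrib, Finset.sum_const, Finset.card_univ, nsmul_eq_mul] at hsum
    rw [← Finset.mul_sum] at hy
    have h2 : ∑ e, cap e * α (Sum.inr e) = - ∑ e, ℓ e * cap e := by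
      rw [← Finset.sum_neg_distrib]
      exact Finset.sum_congr rfl fun e _ => by simp only [hℓ]; ring
    rw [h2] at hy
    have h3 := mul_lt_mul_of_pos_left hy hD
    have h4 : (Fintype.card D : ℝ) * (1 / Fintype.card D * ∑ d, α (Sum.inl d)
        + -∑ e, ℓ e * cap e) = ∑ d, α (Sum.inl d) - Fintype.card D * ∑ e, ℓ e * cap e := by
      field_simp
      ring
    rw [h4] at h3
    linarith
  obtain ⟨y, hyA, hyT⟩ := hmeet
  obtain ⟨J, hJ, z, w, hz, hind, hw, hw1, hwz⟩ := eq_pos_convex_span_of_mem_convexHull hyA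
  choose i hi using fun j => hz ⟨j, rfl⟩
  have hval : ∀ a, ∑ j, w j * pt (i j) a = y a := by
    intro a
    rw [← hwz, Finset.sum_apply]
    exact Finset.sum_congr rfl fun j _ => by rw [hi j]; rfl
  refine ⟨J, hJ, i, w, ?_, hw, fun d => ?_, fun e => ?_⟩
  · have h1 := hind.card_le_finrank_succ
    have h2 : Module.finrank ℝ (vectorSpan ℝ (Set.range z)) ≤ Module.finrank ℝ (D ⊕ E → ℝ) :=
      Submodule.finrank_le _
    rw [Module.finrank_fintype_fun_eq_card, Fintype.card_sum] at h2
    omega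
  · rw [← hyT.1 d, ← hval]
    exact Finset.sum_congr rfl fun j _ => by simp [pt]
  · exact (hval (Sum.inr e)).trans_le (hyT.2 e)

end Duality

section Routing

variable {V : Type} [Fintype V] [DecidableEq V]

/-- The number of times a walk uses the step `(a, b)`. -/
def stepCount {H : SimpleGraph V} (a b : V) {u v : V} (p : H.Walk u v) : ℕ :=
  walkSum (fun x y => if x = a ∧ y = b then 1 else 0) p

lemma stepCount_le_length {H : SimpleGraph V} (a b : V) {u v : V} (p : H.Walk u v) :
    stepCount a b p ≤ p.length := by
  induction p with
  | nil => simp [stepCount, walkSum_nil]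
  | cons h p ih =>
    unfold stepCount at ih ⊢
    rw [walkSum_cons, SimpleGraph.Walk.length_cons]
    split_ifs <;> omega

lemma stepCount_eq_zero {H : SimpleGraph V} {a b : V} (h : ¬ H.Adj a b) {u v : V}
    (p : H.Walk u v) : stepCount a b p = 0 := by
  induction p with
  | nil => simp [stepCount, walkSum_nil]
  | cons h' p ih =>
    unfold stepCount at ih ⊢
    rw [walkSum_cons, ih, if_neg]
    rintro ⟨rfl, rfl⟩
    exact h h'

lemma sum_mul_stepCount {H : SimpleGraph V} (c : V → V → ℝ) {u v : V} (p : H.Walk u v) :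
    ∑ a, ∑ b, c a b * (stepCount a b p : ℝ) = walkSum c p := by
  induction p with
  | nil => simp [stepCount, walkSum_nil]
  | @cons x y z h p ih =>
    rw [walkSum_cons, ← ih]
    have : ∀ a b, c a b * (stepCount a b (SimpleGraph.Walk.cons h p) : ℝ)
        = (if x = a then (if y = b then c a b else 0) else 0) + c a b * (stepCount a b p : ℝ) := by
      intro a b
      unfold stepCount
      rw [walkSum_cons]
      by_cases h1 : x = a <;> by_cases h2 : y = b <;> simp [h1, h2, mul_add]
    simp_rw [this, Finset.sum_add_distrib]
    congr 1
    rw [Finset.sum_eq_single x (fun a _ ha => by simp [Ne.symm ha]) (by simp)]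
    simp

/-- The routing theorem: the commodities `v ⟶ σ b v`, each of demand `1 / (2 |V|)`, can be
routed simultaneously with congestion `Λ` along few walks of bounded length. -/
lemma exists_routing {q : V → V → ℝ} {π : V → ℝ} {Φ : ℝ} {H : SimpleGraph V}
    (net : Network q π Φ H) (K : ℝ) (hK : ∀ v, 1 ≤ K * π v * Fintype.card V)
    (hK0 : 0 ≤ K)
    (σ : Bool → V → V) (hσ : ∀ F : V → ℝ, ∑ d : V × Bool, F (σ d.2 d.1) = 2 * ∑ v, F v)
    (π₀ : ℝ) (hπ₀ : ∀ i, π₀ ≤ π i) (hπ₀1 : π₀ ≤ 1) (hπ₀0 : 0 < π₀) (R h k : ℕ)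
    (hR : 4 < π₀ * (1 + Φ / 32) ^ R) (hh : 24 < h * Φ) (hk : 1 < 2 ^ k * π₀)
    (Λ : ℝ) (hΛ0 : 0 < Λ) (hΛ : 2 * K * (k * h) + 2 * R ≤ Λ) :
    ∃ (J : Type) (_ : Fintype J) (e : J → V × Bool)
      (p : ∀ j, H.Walk (e j).1 (σ (e j).2 (e j).1)) (x : J → ℝ),
      Fintype.card J ≤ 2 * Fintype.card V
        + (Finset.univ.filter fun a : V × V => q a.1 a.2 ≠ 0).card + 1 ∧
      (∀ j, 0 < x j) ∧ (∀ j, (p j).length ≤ 2 * (k * h) + 2 * R) ∧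
      (∀ d, ∑ j, (if e j = d then x j else 0) = 1 / (2 * Fintype.card V)) ∧
      ∀ u v, ∑ j, x j * (stepCount u v (p j) : ℝ) ≤ Λ * q u v := by
  classical
  have hne : Nonempty V := by
    by_contra hne
    rw [not_nonempty_iff] at hne
    have := net.total
    simp at this
  set L := 2 * (k * h) + 2 * R with hL
  let I := Σ d : V × Bool, {p : H.Walk d.1 (σ d.2 d.1) // p.length ≤ L}
  let E := {a : V × V // q a.1 a.2 ≠ 0}
  have hcardD : (Fintype.card (V × Bool) : ℝ) = 2 * Fintype.card V := by
    rw [Fintype.card_prod, Fintype.card_bool]; push_cast; ring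
  obtain ⟨J, hJ, i, x, hcard, hx, hd, he⟩ := exists_fractional (D := V × Bool) (E := E) (I := I)
    (fun i => i.1) (fun i a => stepCount a.1.1 a.1.2 i.2.1) L
    (fun i a => (stepCount_le_length _ _ _).trans i.2.2) (fun a => Λ * q a.1.1 a.1.2)
    (fun a => mul_nonneg hΛ0.le (net.nonneg _ _)) (by
      intro ℓ hℓ Z hZ hℓZ
      let c : V → V → ℝ := fun u v => if hq : q u v ≠ 0 then ℓ ⟨(u, v), hq⟩ else 0
      have hc : ∀ u v, 0 ≤ c u v := by
        intro u v
        simp only [c]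
        split_ifs
        exacts [hℓ _, le_rfl]
      -- sums over the support of `q` agree with sums over all pairs
      have hsum : ∀ F : V → V → ℝ, ∑ u, ∑ v, c u v * F u v
          = ∑ a : E, ℓ a * F a.1.1 a.1.2 := by
        intro F
        rw [← Fintype.sum_prod_type' (f := fun u v => c u v * F u v)]
        rw [← Finset.sum_filter_add_sum_filter_not Finset.univ (fun a : V × V => q a.1 a.2 ≠ 0)]
        rw [Finset.sum_eq_zero (s := Finset.univ.filter fun a : V × V => ¬ q a.1 a.2 ≠ 0), add_zero]
        · rw [← Finset.sum_subtype_eq_sum_filter]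
          rw [Finset.subtype_univ]
          refine Finset.sum_congr rfl fun a _ => ?_
          simp only [c]
          rw [dif_pos a.2]
        · intro a ha
          simp only [Finset.mem_filter] at ha
          simp only [c]
          rw [dif_neg ha.2, zero_mul]
      obtain ⟨p, hpl, hps⟩ := exists_cheap_walks net K hK hK0 σ hσ π₀ hπ₀ hπ₀1 hπ₀0 R h k hR hh hk
        c hc (Z / Λ) (div_pos hZ hΛ0) (by
          rw [hsum, le_div_iff₀ hΛ0, Finset.sum_mul]
          exact (Finset.sum_congr rfl fun a _ => by ring).trans_le hℓZ)
      refine ⟨fun d => ⟨d, p d, hpl d⟩, fun d => rfl, ?_⟩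
      rw [hcardD]
      have h1 : ∀ d, ∑ a : E, ℓ a * (stepCount a.1.1 a.1.2 (p d) : ℝ) = walkSum c (p d) := by
        intro d
        rw [← sum_mul_stepCount, hsum]
      simp only [h1]
      refine hps.trans ?_
      apply mul_le_mul_of_nonneg_left _ (by positivity)
      calc (2 * K * (k * h) + 2 * R) * (Z / Λ) ≤ Λ * (Z / Λ) :=
            mul_le_mul_of_nonneg_right hΛ (div_pos hZ hΛ0).le
        _ = Z := by field_simp)
  refine ⟨J, hJ, fun j => (i j).1, fun j => (i j).2.1, x, ?_, hx, fun j => (i j).2.2, ?_, ?_⟩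
  · rw [Fintype.card_prod, Fintype.card_bool, Fintype.card_subtype] at hcard
    omega
  · intro d
    rw [← hcardD]
    exact hd d
  · intro u v
    by_cases hq : q u v = 0
    · have : ∀ j, stepCount u v (i j).2.1 = 0 := fun j =>
        stepCount_eq_zero (by rw [net.adj]; simpa using hq) _
      simp [this, hq]
    · exact he ⟨(u, v), hq⟩

end Routing

/-! ### Trajectories -/

section PathSystem

variable {V : Type} [Fintype V] [DecidableEq V]

/-- Weighted trajectories `w j 0, …, w j L` that carry the flow `M u v / |V|` from `u` to `v`. A
trajectory moves along edges of `q` until it reaches its target and then waits there; `cong` bounds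
the flow across an edge and `occ` bounds the flow through a vertex. -/
structure PathSystem {J : Type} [Fintype J] (q : V → V → ℝ) (π : V → ℝ) (M : V → V → ℝ) (L : ℕ)
    (Λ : ℝ) (w : J → ℕ → V) (x : J → ℝ) : Prop where
  pos : ∀ j, 0 < x j
  step : ∀ j s, w j s = w j (s + 1) ∨ q (w j s) (w j (s + 1)) ≠ 0
  demand : ∀ u v, ∑ j, (if w j 0 = u ∧ w j L = v then x j else 0) = M u v / Fintype.card V
  cong : ∀ u v, u ≠ v → ∑ j, ∑ s ∈ Finset.range L,
    (if w j s = u ∧ w j (s + 1) = v then x j else 0) ≤ Λ * q u v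
  occ : ∀ v, ∑ j, ∑ s ∈ Finset.range L, (if w j s = v then x j else 0)
    ≤ Λ * (π v / 2) + L / Fintype.card V

/-- The transition matrix of the walk `v ⟶ σ b v` with a uniformly random bit `b`. -/
noncomputable def bitWalk (σ : Bool → V → V) (u v : V) : ℝ :=
  ∑ b, if σ b u = v then (1 / 2 : ℝ) else 0

lemma bitWalk_row (σ : Bool → V → V) (u : V) : ∑ v, bitWalk σ u v = 1 := by
  unfold bitWalk
  rw [Finset.sum_comm]
  simp

lemma bitWalk_col (σ : Bool → V → V)
    (hσ : ∀ F : V → ℝ, ∑ d : V × Bool, F (σ d.2 d.1) = 2 * ∑ v, F v) (v : V) :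
    ∑ u, bitWalk σ u v = 1 := by
  unfold bitWalk
  have := hσ fun y => if y = v then (1 / 2 : ℝ) else 0
  rw [Fintype.sum_prod_type] at this
  rw [this]
  simp

lemma stepCount_eq_sum_range {H : SimpleGraph V} {a b : V} (hab : a ≠ b) {u v : V}
    (p : H.Walk u v) (L : ℕ) (hL : p.length ≤ L) :
    stepCount a b p
      = ∑ s ∈ Finset.range L, if p.getVert s = a ∧ p.getVert (s + 1) = b then 1 else 0 := by
  induction p generalizing L with
  | nil =>
    symm
    simp only [stepCount, walkSum_nil]
    refine Finset.sum_eq_zero fun s _ => if_neg ?_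
    simp only [SimpleGraph.Walk.getVert_nil]
    rintro ⟨h1, h2⟩
    exact hab (h1.symm.trans h2)
  | cons h p ih =>
    rw [SimpleGraph.Walk.length_cons] at hL
    obtain ⟨L, rfl⟩ : ∃ L', L = L' + 1 := ⟨L - 1, by omega⟩
    have := ih L (by omega)
    unfold stepCount at this ⊢
    rw [walkSum_cons, this, Finset.sum_range_succ', add_comm]
    simp only [SimpleGraph.Walk.getVert_cons_succ, SimpleGraph.Walk.getVert_zero]
    congr!

lemma getVert_stopped {H : SimpleGraph V} {u v : V} (p : H.Walk u v) (s : ℕ)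
    (h : p.getVert s = p.getVert (s + 1)) : p.getVert s = v := by
  by_cases hs : s < p.length
  · exact absurd h (p.adj_getVert_succ hs).ne
  · exact p.getVert_of_length_le (by omega)

lemma exists_pathSystem {q : V → V → ℝ} {π : V → ℝ} {Φ : ℝ} {H : SimpleGraph V}
    (net : Network q π Φ H) (K : ℝ) (hK : ∀ v, 1 ≤ K * π v * Fintype.card V)
    (hK0 : 0 ≤ K)
    (σ : Bool → V → V) (hσ : ∀ F : V → ℝ, ∑ d : V × Bool, F (σ d.2 d.1) = 2 * ∑ v, F v)
    (π₀ : ℝ) (hπ₀ : ∀ i, π₀ ≤ π i) (hπ₀1 : π₀ ≤ 1) (hπ₀0 : 0 < π₀) (R h k : ℕ)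
    (hR : 4 < π₀ * (1 + Φ / 32) ^ R) (hh : 24 < h * Φ) (hk : 1 < 2 ^ k * π₀)
    (Λ : ℝ) (hΛ0 : 0 < Λ) (hΛ : 2 * K * (k * h) + 2 * R ≤ Λ) :
    ∃ (J : Type) (_ : Fintype J) (w : J → ℕ → V) (x : J → ℝ),
      Fintype.card J ≤ 2 * Fintype.card V
        + (Finset.univ.filter fun a : V × V => q a.1 a.2 ≠ 0).card + 1 ∧
      PathSystem q π (bitWalk σ) (2 * (k * h) + 2 * R) Λ w x := by
  obtain ⟨J, hJ, e, p, x, hcard, hx, hlen, hd, hc⟩ := exists_routing net K hK hK0 σ hσ π₀ hπ₀ hπ₀1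
    hπ₀0 R h k hR hh hk Λ hΛ0 hΛ
  set L := 2 * (k * h) + 2 * R with hL
  have hend : ∀ j, (p j).getVert L = σ (e j).2 (e j).1 := fun j =>
    (p j).getVert_of_length_le (hlen j)
  have hdem : ∀ u v, ∑ j, (if (p j).getVert 0 = u ∧ (p j).getVert L = v then x j else 0)
      = bitWalk σ u v / Fintype.card V := by
    intro u v
    have h1 : ∀ j, (if (p j).getVert 0 = u ∧ (p j).getVert L = v then x j else 0)
        = ∑ b, if σ b u = v then (if e j = (u, b) then x j else 0) else 0 := by
      intro j
      rw [SimpleGraph.Walk.getVert_zero, hend]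
      rcases hej : e j with ⟨a, b⟩
      by_cases ha : a = u
      · subst ha
        rcases b <;> simp
      · simp [ha]
    simp_rw [h1]
    rw [Finset.sum_comm]
    unfold bitWalk
    rw [Finset.sum_div]
    refine Finset.sum_congr rfl fun b _ => ?_
    by_cases hb : σ b u = v
    · simp only [hb, if_true]
      rw [hd]
      field_simp
    · simp [hb]
  have hcong : ∀ u v, u ≠ v → ∑ j, ∑ s ∈ Finset.range L,
      (if (p j).getVert s = u ∧ (p j).getVert (s + 1) = v then x j else 0) ≤ Λ * q u v := by
    intro u v huv
    refine le_trans (le_of_eq ?_) (hc u v)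
    refine Finset.sum_congr rfl fun j _ => ?_
    rw [stepCount_eq_sum_range huv (p j) L (hlen j)]
    push_cast
    rw [Finset.mul_sum]
    exact Finset.sum_congr rfl fun s _ => by split_ifs <;> simp
  refine ⟨J, hJ, fun j s => (p j).getVert s, x, hcard, hx, ?_, hdem, hcong, ?_⟩
  · intro j s
    by_cases hs : s < (p j).length
    · exact Or.inr ((net.adj _ _).mp ((p j).adj_getVert_succ hs))
    · left
      rw [(p j).getVert_of_length_le (by omega), (p j).getVert_of_length_le (by omega)]
  · intro v
    -- a visit is followed by a departure, or else the walk waits at its target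
    have hvis : ∀ j s, (if (p j).getVert s = v then x j else 0)
        ≤ ∑ u ∈ Finset.univ.erase v,
            (if (p j).getVert s = v ∧ (p j).getVert (s + 1) = u then x j else 0)
          + if (p j).getVert L = v then x j else 0 := by
      intro j s
      have hn : 0 ≤ ∑ u ∈ Finset.univ.erase v,
          (if (p j).getVert s = v ∧ (p j).getVert (s + 1) = u then x j else 0) :=
        Finset.sum_nonneg fun u _ => by split_ifs; exacts [(hx j).le, le_rfl]
      have hn' : 0 ≤ if (p j).getVert L = v then x j else 0 := by
        split_ifs; exacts [(hx j).le, le_rfl]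
      by_cases h1 : (p j).getVert s = v
      swap
      · rw [if_neg h1]; positivity
      rw [if_pos h1]
      by_cases h2 : (p j).getVert (s + 1) = v
      · have h3 := getVert_stopped (p j) s (h1.trans h2.symm)
        rw [if_pos ((hend j).trans (h3.symm.trans h1))]
        linarith
      · have : x j ≤ ∑ u ∈ Finset.univ.erase v,
            (if (p j).getVert s = v ∧ (p j).getVert (s + 1) = u then x j else 0) := by
          simp [h1, h2]
        linarith
    calc ∑ j, ∑ s ∈ Finset.range L, (if (p j).getVert s = v then x j else 0)
        ≤ ∑ j, ∑ s ∈ Finset.range L, (∑ u ∈ Finset.univ.erase v,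
            (if (p j).getVert s = v ∧ (p j).getVert (s + 1) = u then x j else 0)
          + if (p j).getVert L = v then x j else 0) :=
          Finset.sum_le_sum fun j _ => Finset.sum_le_sum fun s _ => hvis j s
      _ = ∑ u ∈ Finset.univ.erase v, ∑ j, ∑ s ∈ Finset.range L,
            (if (p j).getVert s = v ∧ (p j).getVert (s + 1) = u then x j else 0)
          + L * ∑ j, if (p j).getVert L = v then x j else 0 := by
          simp_rw [Finset.sum_add_distrib]
          congr 1
          · rw [Finset.sum_comm' (s := Finset.univ.erase v) (t := fun _ => Finset.univ)
              (t' := Finset.univ) (s' := fun _ => Finset.univ.erase v) (by intros; tauto)]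
            exact Finset.sum_congr rfl fun j _ => Finset.sum_comm
          · rw [Finset.mul_sum]
            simp
      _ ≤ Λ * (π v / 2) + L / Fintype.card V := by
          apply add_le_add
          · calc _ ≤ ∑ u ∈ Finset.univ.erase v, Λ * q v u :=
                  Finset.sum_le_sum fun u hu => hcong v u (Finset.ne_of_mem_erase hu).symm
              _ ≤ ∑ u, Λ * q v u := Finset.sum_le_univ_sum_of_nonneg fun u =>
                  mul_nonneg hΛ0.le (net.nonneg _ _)
              _ ≤ Λ * (π v / 2) := by
                  rw [← Finset.mul_sum]
                  exact mul_le_mul_of_nonneg_left (net.row v) hΛ0.le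
          · have h1 : ∑ j, (if (p j).getVert L = v then x j else 0)
                = ∑ u, ∑ j, if (p j).getVert 0 = u ∧ (p j).getVert L = v then x j else 0 := by
              rw [Finset.sum_comm]
              refine Finset.sum_congr rfl fun j _ => ?_
              by_cases h : (p j).getVert L = v <;> simp [h]
            rw [h1, Finset.sum_congr rfl fun u _ => hdem u v, ← Finset.sum_div,
              bitWalk_col σ hσ]
            exact le_of_eq (by ring)

end PathSystem

/-! ### The de Bruijn walk -/

section DeBruijn

variable {V : Type} [Fintype V] [DecidableEq V]

/-- The de Bruijn expander: number the vertices by residues modulo `n = |V|` and let `σ b i` be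
`2 i + b`. After `k` steps from `i` one is at `2 ^ k i + c` with `c` uniform in `[0, 2 ^ k)`, so all
vertices are reached with probability at least `1 / (2 n)` once `n ≤ 2 ^ k`. -/
lemma exists_deBruijn [Nonempty V] :
    ∃ σ : Bool → V → V, (∀ F : V → ℝ, ∑ d : V × Bool, F (σ d.2 d.1) = 2 * ∑ v, F v) ∧
      ∀ k, Fintype.card V ≤ 2 ^ k → ∀ x y,
        1 / (2 * (Fintype.card V : ℝ)) ≤ ((Matrix.of (bitWalk σ)) ^ k) x y := by
  set n := Fintype.card V with hn
  have hn0 : 0 < n := Fintype.card_pos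
  let ε : V ≃ Fin n := Fintype.equivFin V
  let at' : ℕ → V := fun m => ε.symm ⟨m % n, Nat.mod_lt _ hn0⟩
  let σ : Bool → V → V := fun b v => at' (2 * (ε v : ℕ) + b.toNat)
  have hat_mod : ∀ a b, a % n = b % n → at' a = at' b := by
    intro a b hab
    simp only [at', hab]
  have hat_self : ∀ v, at' (ε v) = v := by
    intro v
    simp [at', Nat.mod_eq_of_lt (ε v).2]
  have hε_at : ∀ m, (ε (at' m) : ℕ) = m % n := by
    intro m
    simp [at']
  have hsum : ∀ G : ℕ → ℝ, ∑ v, G (ε v) = ∑ i ∈ Finset.range n, G i := by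
    intro G
    rw [← Fin.sum_univ_eq_sum_range]
    exact Fintype.sum_equiv ε _ _ fun v => rfl
  have hdouble : ∀ (G : ℕ → ℝ) (m : ℕ),
      ∑ i ∈ Finset.range m, (G (2 * i) + G (2 * i + 1)) = ∑ i ∈ Finset.range (2 * m), G i := by
    intro G m
    induction m with
    | zero => simp
    | succ m ih =>
      rw [Finset.sum_range_succ, ih, Nat.mul_succ, Finset.sum_range_succ, Finset.sum_range_succ]
      ring
  refine ⟨σ, ?_, ?_⟩
  · intro F
    rw [Fintype.sum_prod_type]
    have h1 : ∀ v, ∑ b, F (σ b v) = F (at' (2 * (ε v : ℕ))) + F (at' (2 * (ε v : ℕ) + 1)) := by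
      intro v
      rw [Fintype.sum_bool, add_comm]
      rfl
    have h2 : ∑ v, F v = ∑ i ∈ Finset.range n, F (at' i) := by
      rw [← hsum fun i => F (at' i)]
      exact Finset.sum_congr rfl fun v _ => by rw [hat_self]
    simp only [h1]
    rw [hsum fun i => F (at' (2 * i)) + F (at' (2 * i + 1)), hdouble (fun i => F (at' i)), two_mul n,
      Finset.sum_range_add, h2, two_mul]
    congr 1
    exact Finset.sum_congr rfl fun i _ => by rw [hat_mod (n + i) i (by simp)]
  · have hstep : ∀ (F : V → ℝ) (x : V), ∑ z, bitWalk σ x z * F z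
        = (F (at' (2 * (ε x : ℕ))) + F (at' (2 * (ε x : ℕ) + 1))) / 2 := by
      intro F x
      unfold bitWalk
      simp_rw [Finset.sum_mul, ite_mul, zero_mul]
      rw [Finset.sum_comm]
      simp only [Finset.sum_ite_eq, Finset.mem_univ, if_true]
      rw [Fintype.sum_bool]
      change 1 / 2 * F (at' (2 * (ε x : ℕ) + 1)) + 1 / 2 * F (at' (2 * (ε x : ℕ))) = _
      ring
    have hpow : ∀ (k : ℕ) (x y : V), ((Matrix.of (bitWalk σ)) ^ k) x y
        = (∑ c ∈ Finset.range (2 ^ k), if at' (2 ^ k * (ε x : ℕ) + c) = y then (1 : ℝ) else 0)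
          / 2 ^ k := by
      intro k
      induction k with
      | zero =>
        intro x y
        simp only [pow_zero, Finset.range_one, Finset.sum_singleton, one_mul, add_zero, hat_self,
          div_one, Matrix.one_apply]
      | succ k ih =>
        intro x y
        rw [pow_succ', Matrix.mul_apply]
        simp only [Matrix.of_apply]
        rw [hstep, ih, ih, pow_succ, mul_two, Finset.sum_range_add]
        have e1 : ∀ c, at' (2 ^ k * (ε (at' (2 * (ε x : ℕ))) : ℕ) + c)
            = at' ((2 ^ k + 2 ^ k) * (ε x : ℕ) + c) := by
          intro c
          apply hat_mod
          rw [hε_at]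
          apply Nat.ModEq.add_right
          calc 2 ^ k * (2 * (ε x : ℕ) % n) ≡ 2 ^ k * (2 * (ε x : ℕ)) [MOD n] :=
                Nat.ModEq.mul_left _ (Nat.mod_modEq _ _)
            _ = (2 ^ k + 2 ^ k) * (ε x : ℕ) := by ring
        have e2 : ∀ c, at' (2 ^ k * (ε (at' (2 * (ε x : ℕ) + 1)) : ℕ) + c)
            = at' ((2 ^ k + 2 ^ k) * (ε x : ℕ) + (2 ^ k + c)) := by
          intro c
          apply hat_mod
          rw [hε_at]
          calc 2 ^ k * ((2 * (ε x : ℕ) + 1) % n) + c ≡ 2 ^ k * (2 * (ε x : ℕ) + 1) + c [MOD n] :=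
                Nat.ModEq.add_right _ (Nat.ModEq.mul_left _ (Nat.mod_modEq _ _))
            _ = (2 ^ k + 2 ^ k) * (ε x : ℕ) + (2 ^ k + c) := by ring
        simp only [e1, e2]
        field_simp
        ring
    have hnn : ∀ x y, 0 ≤ bitWalk σ x y := fun x y =>
      Finset.sum_nonneg fun b _ => by split_ifs <;> norm_num
    intro k
    induction k with
    | zero =>
      intro hk x y
      have : n = 1 := by simp at hk; omega
      have hss : Subsingleton V := Fintype.card_le_one_iff_subsingleton.mp (by omega)
      rw [this, Subsingleton.elim x y]
      simp
      norm_num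
    | succ k ih =>
      intro hk x y
      by_cases hk' : n ≤ 2 ^ k
      · rw [pow_succ', Matrix.mul_apply]
        calc 1 / (2 * (n : ℝ)) = ∑ z, bitWalk σ x z * (1 / (2 * (n : ℝ))) := by
              rw [← Finset.sum_mul, bitWalk_row, one_mul]
          _ ≤ _ := Finset.sum_le_sum fun z _ => mul_le_mul_of_nonneg_left (ih hk' z y) (hnn x z)
      · push Not at hk'
        rw [hpow]
        set a := 2 ^ (k + 1) * (ε x : ℕ) with ha
        have hhit : ∃ c < n, at' (a + c) = y := by
          refine ⟨((ε y : ℕ) + (n - a % n)) % n, Nat.mod_lt _ hn0, ?_⟩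
          rw [← hat_self y]
          apply hat_mod
          rw [hat_self]
          have h1 : a % n < n := Nat.mod_lt _ hn0
          calc a + ((ε y : ℕ) + (n - a % n)) % n ≡ a % n + ((ε y : ℕ) + (n - a % n)) [MOD n] :=
                Nat.ModEq.add (Nat.mod_modEq _ _).symm (Nat.mod_modEq _ _)
            _ = (ε y : ℕ) + n := by omega
            _ ≡ ε y [MOD n] := by simp
        obtain ⟨c, hc, hcy⟩ := hhit
        have h1 : (1 : ℝ) ≤ ∑ c ∈ Finset.range (2 ^ (k + 1)),
            if at' (a + c) = y then (1 : ℝ) else 0 := by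
          refine le_trans (by rw [if_pos hcy]) (Finset.single_le_sum
            (f := fun c => if at' (a + c) = y then (1 : ℝ) else 0) (fun c _ => ?_)
            (Finset.mem_range.mpr (hc.trans_le hk)))
          split_ifs <;> norm_num
        have h2 : (2 : ℝ) ^ (k + 1) ≤ 2 * n := by
          rw [pow_succ, mul_comm]
          have : (2 : ℝ) ^ k ≤ n := by exact_mod_cast hk'.le
          linarith
        calc 1 / (2 * (n : ℝ)) ≤ 1 / 2 ^ (k + 1) := one_div_le_one_div_of_le (by positivity) h2
          _ ≤ _ := div_le_div_of_nonneg_right h1 (by positivity)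

end DeBruijn

/-! ### Minorization and mixing of finite chains -/

section Markov

variable {W : Type} [Fintype W] [DecidableEq W]

lemma RowStochastic.mul {A B : Matrix W W ℝ} (hA : RowStochastic A) (hB : RowStochastic B) :
    RowStochastic (A * B) := by
  refine ⟨fun i j => ?_, fun i => ?_⟩
  · rw [Matrix.mul_apply]
    exact Finset.sum_nonneg fun l _ => mul_nonneg (hA.1 _ _) (hB.1 _ _)
  · simp_rw [Matrix.mul_apply]
    rw [Finset.sum_comm]
    simp_rw [← Finset.mul_sum, hB.2, mul_one, hA.2]

lemma RowStochastic.pow {A : Matrix W W ℝ} (hA : RowStochastic A) (t : ℕ) :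
    RowStochastic (A ^ t) := by
  induction t with
  | zero => exact ⟨fun i j => by rw [pow_zero, Matrix.one_apply]; split_ifs <;> norm_num,
      fun i => by simp [Matrix.one_apply]⟩
  | succ t ih => rw [pow_succ]; exact ih.mul hA

lemma Stationary.pow {A : Matrix W W ℝ} {μ : W → ℝ} (h : Stationary A μ) (t : ℕ) :
    Stationary (A ^ t) μ := by
  induction t with
  | zero => intro j; simp [Matrix.one_apply]
  | succ t ih =>
    intro j
    rw [pow_succ]
    simp_rw [Matrix.mul_apply, Finset.mul_sum]
    rw [Finset.sum_comm]
    simp_rw [← mul_assoc, ← Finset.sum_mul, ih _]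
    exact h j

/-- A stochastic matrix all of whose rows dominate `ν` contracts the `ℓ¹` norm of signed measures of
total mass zero by the factor `1 - ∑ ν`. -/
lemma l1_contract {A : Matrix W W ℝ} (hA : RowStochastic A) (ν : W → ℝ)
    (hν : ∀ x y, ν y ≤ A x y) (μ : W → ℝ) (hμ : ∑ x, μ x = 0) :
    ∑ y, |∑ x, μ x * A x y| ≤ (1 - ∑ y, ν y) * ∑ x, |μ x| := by
  calc ∑ y, |∑ x, μ x * A x y| = ∑ y, |∑ x, μ x * (A x y - ν y)| := by
        refine Finset.sum_congr rfl fun y _ => ?_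
        congr 1
        simp_rw [mul_sub, Finset.sum_sub_distrib, ← Finset.sum_mul, hμ]
        ring
    _ ≤ ∑ y, ∑ x, |μ x| * (A x y - ν y) := by
        refine Finset.sum_le_sum fun y _ => (Finset.abs_sum_le_sum_abs _ _).trans ?_
        refine Finset.sum_le_sum fun x _ => ?_
        rw [abs_mul, abs_of_nonneg (sub_nonneg.mpr (hν x y))]
    _ = (1 - ∑ y, ν y) * ∑ x, |μ x| := by
        rw [Finset.sum_comm, Finset.mul_sum]
        refine Finset.sum_congr rfl fun x _ => ?_
        rw [← Finset.mul_sum, Finset.sum_sub_distrib, hA.2]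
        ring

/-- Doeblin's theorem: if all rows of `A ^ N` dominate `ν`, the total variation distance from
equilibrium contracts by the factor `1 - ∑ ν` every `N` steps. -/
lemma doeblin {A : Matrix W W ℝ} (hA : RowStochastic A) {μ : W → ℝ} (hμ : Stationary A μ)
    (hμ0 : ∀ x, 0 ≤ μ x) (hμ1 : ∑ x, μ x = 1) (N m : ℕ) (ν : W → ℝ)
    (hν : ∀ x y, ν y ≤ (A ^ N) x y) (hc : (1 - ∑ y, ν y) ^ m ≤ 1 / 4)
    (hc1 : ∑ y, ν y ≤ 1) (t : ℕ) (ht : N * m ≤ t) (x : W) :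
    (1 / 2) * ∑ y, |(A ^ t) x y - μ y| ≤ 1 / 4 := by
  set D : ℕ → ℝ := fun t => ∑ y, |(A ^ t) x y - μ y| with hD
  have hsub : ∀ t s y, (A ^ (t + s)) x y - μ y = ∑ z, ((A ^ t) x z - μ z) * (A ^ s) z y := by
    intro t s y
    simp_rw [sub_mul, Finset.sum_sub_distrib]
    rw [hμ.pow s y, pow_add, Matrix.mul_apply]
  have hzero : ∀ t, ∑ z, ((A ^ t) x z - μ z) = 0 := by
    intro t
    rw [Finset.sum_sub_distrib, (hA.pow t).2, hμ1, sub_self]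
  have hmono : ∀ t s, D (t + s) ≤ D t := by
    intro t s
    have := l1_contract (hA.pow s) 0 (fun x y => (hA.pow s).1 x y) _ (hzero t)
    simp only [hD, hsub]
    simpa using this
  have hstep : ∀ t, D (t + N) ≤ (1 - ∑ y, ν y) * D t := by
    intro t
    have := l1_contract (hA.pow N) ν hν _ (hzero t)
    simp only [hD, hsub]
    exact this
  have hD0 : D 0 ≤ 2 := by
    simp only [hD]
    calc ∑ y, |(A ^ 0) x y - μ y| ≤ ∑ y, ((A ^ 0) x y + μ y) := Finset.sum_le_sum fun y _ => by
          rw [abs_le]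
          have := (hA.pow 0).1 x y; have := hμ0 y
          constructor <;> linarith
      _ = 2 := by rw [Finset.sum_add_distrib, (hA.pow 0).2, hμ1]; norm_num
  have hblock : ∀ m, D (N * m) ≤ (1 - ∑ y, ν y) ^ m * 2 := by
    intro m
    induction m with
    | zero => simpa using hD0
    | succ m ih =>
      rw [Nat.mul_succ, pow_succ']
      refine (hstep _).trans ?_
      rw [mul_assoc]
      exact mul_le_mul_of_nonneg_left ih (by linarith)
  obtain ⟨s, rfl⟩ := Nat.exists_eq_add_of_le ht
  have h1 := hmono (N * m) s
  have h2 := hblock m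
  simp only [hD] at h1 h2
  linarith

/-- A stochastic mixture `(1 - ρ) P₀ + ρ T` whose reset part `T`, followed by `N` steps, reaches
each of the states `Y v` with probability at least `κ`. Conditioning on the first reset among the
first `S` steps yields a common minorant of all rows of `A ^ (N + S)`. -/
lemma exists_minorant {V : Type} [Fintype V] {A P₀ T : Matrix W W ℝ} (hA : RowStochastic A)
    (hP₀ : RowStochastic P₀) (hT : RowStochastic T) (ρ : ℝ) (hρ0 : 0 ≤ ρ) (hρ1 : ρ ≤ 1)
    (hmix : A = (1 - ρ) • P₀ + ρ • T) (Y : V → W) (hY : Function.Injective Y) (N : ℕ) (κ : ℝ)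
    (hκ : ∀ x v, κ ≤ (T * A ^ N) x (Y v)) (S : ℕ) :
    ∃ ν : W → ℝ, (∀ x y, ν y ≤ (A ^ (N + S)) x y) ∧
      ∑ y, ν y = κ * Fintype.card V * (1 - (1 - ρ) ^ S) := by
  induction S with
  | zero => exact ⟨0, fun x y => (hA.pow _).1 x y, by simp⟩
  | succ S ih =>
    obtain ⟨ν, hν, hνs⟩ := ih
    refine ⟨fun y => (1 - ρ) * ν y + ρ * ∑ v, κ * (A ^ S) (Y v) y, fun x y => ?_, ?_⟩
    · have h1 : A ^ (N + (S + 1))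
          = (1 - ρ) • (P₀ * A ^ (N + S)) + ρ • (T * A ^ N * A ^ S) := by
        rw [← add_assoc, pow_succ']
        rw [mul_assoc, ← pow_add, ← smul_mul_assoc, ← smul_mul_assoc, ← add_mul, ← hmix]
      rw [h1]
      simp only [Matrix.add_apply, Matrix.smul_apply, smul_eq_mul]
      apply add_le_add
      · apply mul_le_mul_of_nonneg_left _ (by linarith)
        rw [Matrix.mul_apply]
        calc ν y = ∑ z, P₀ x z * ν y := by rw [← Finset.sum_mul, hP₀.2, one_mul]
          _ ≤ _ := Finset.sum_le_sum fun z _ => mul_le_mul_of_nonneg_left (hν z y) (hP₀.1 x z)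
      · apply mul_le_mul_of_nonneg_left _ hρ0
        rw [Matrix.mul_apply]
        have hTA := hT.mul (hA.pow N)
        calc ∑ v, κ * (A ^ S) (Y v) y ≤ ∑ v, (T * A ^ N) x (Y v) * (A ^ S) (Y v) y :=
              Finset.sum_le_sum fun v _ => mul_le_mul_of_nonneg_right (hκ x v) ((hA.pow S).1 _ _)
          _ = ∑ z ∈ Finset.univ.image Y, (T * A ^ N) x z * (A ^ S) z y := by
              rw [Finset.sum_image fun a _ b _ h => hY h]
          _ ≤ _ := Finset.sum_le_univ_sum_of_nonneg fun z =>
              mul_nonneg (hTA.1 _ _) ((hA.pow S).1 _ _)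
    · rw [Finset.sum_add_distrib, ← Finset.mul_sum, ← Finset.mul_sum, hνs, Finset.sum_comm]
      simp_rw [← Finset.mul_sum, (hA.pow S).2]
      simp only [mul_one, Finset.sum_const, Finset.card_univ, nsmul_eq_mul]
      ring

lemma matrix_pow_mono {A B : Matrix W W ℝ} (hB : ∀ x y, 0 ≤ B x y) (a : ℝ) (ha : 0 ≤ a)
    (h : ∀ x y, a * B x y ≤ A x y) (t : ℕ) :
    (∀ x y, 0 ≤ (B ^ t) x y) ∧ ∀ x y, a ^ t * (B ^ t) x y ≤ (A ^ t) x y := by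
  induction t with
  | zero =>
    refine ⟨fun x y => ?_, fun x y => by simp⟩
    rw [pow_zero, Matrix.one_apply]
    split_ifs <;> norm_num
  | succ t ih =>
    simp only [pow_succ, Matrix.mul_apply]
    refine ⟨fun x y => Finset.sum_nonneg fun z _ => mul_nonneg (ih.1 _ _) (hB _ _), fun x y => ?_⟩
    rw [Finset.mul_sum]
    refine Finset.sum_le_sum fun z _ => ?_
    calc a ^ t * a * ((B ^ t) x z * B z y) = (a ^ t * (B ^ t) x z) * (a * B z y) := by ring
      _ ≤ _ := mul_le_mul (ih.2 _ _) (h _ _) (mul_nonneg ha (hB _ _))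
          ((mul_nonneg (pow_nonneg ha _) (ih.1 _ _)).trans (ih.2 _ _))

/-- If `B` restricted to the states `Y v` dominates `M`, then so do the powers. -/
lemma pow_restrict_le {V : Type} [Fintype V] [DecidableEq V] {B : Matrix W W ℝ}
    (hB : ∀ x y, 0 ≤ B x y) (Y : V → W) (hY : Function.Injective Y) (M : Matrix V V ℝ)
    (hM : ∀ u v, 0 ≤ M u v) (h : ∀ u v, M u v ≤ B (Y u) (Y v)) (k : ℕ) (u v : V) :
    (M ^ k) u v ≤ (B ^ k) (Y u) (Y v) := by
  have hBk : ∀ k x y, 0 ≤ (B ^ k) x y := fun k => (matrix_pow_mono hB 1 (by norm_num)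
    (fun x y => (one_mul _).le) k).1
  induction k generalizing v with
  | zero =>
    simp only [pow_zero, Matrix.one_apply, hY.eq_iff, le_refl]
  | succ k ih =>
    simp only [pow_succ, Matrix.mul_apply]
    calc ∑ z, (M ^ k) u z * M z v ≤ ∑ z, (B ^ k) (Y u) (Y z) * B (Y z) (Y v) :=
          Finset.sum_le_sum fun z _ => mul_le_mul (ih z) (h z v) (hM z v) (hBk k _ _)
      _ = ∑ z ∈ Finset.univ.image Y, (B ^ k) (Y u) z * B z (Y v) := by
          rw [Finset.sum_image fun a _ b _ h => hY h]
      _ ≤ _ := Finset.sum_le_univ_sum_of_nonneg fun z => mul_nonneg (hBk k _ _) (hB _ _)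

end Markov

/-! ### The lifted chain -/

section Lift

/-- The data of the lifted chain: trajectories `w j` of length `L` and weight `x j`, reset
probability `ρ`, hub mass `η`, and the distribution `π` and ergodic flow `Q` of the chain to be
lifted. -/
structure LiftData (V J : Type) where
  w : J → ℕ → V
  x : J → ℝ
  L : ℕ
  ρ : ℝ
  η : ℝ
  π : V → ℝ
  Q : V → V → ℝ

namespace LiftData

variable {V J : Type} [Fintype V] [DecidableEq V] [Fintype J] [DecidableEq J]

/-- The states of the lifted chain: a hub over each vertex, the points of the trajectories, and a
residual copy of each vertex that carries the flow not used by the trajectories. -/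
abbrev Node (D : LiftData V J) : Type := V ⊕ (J × Fin D.L) ⊕ V

/-- The hub over `v`. -/
abbrev hub (D : LiftData V J) (v : V) : D.Node := Sum.inl v

/-- A point of a trajectory. -/
abbrev path (D : LiftData V J) (a : J × Fin D.L) : D.Node := Sum.inr (Sum.inl a)

/-- The residual copy of `v`. -/
abbrev res (D : LiftData V J) (v : V) : D.Node := Sum.inr (Sum.inr v)

/-- The projection of the lifted state space. -/
def proj (D : LiftData V J) : D.Node → V :=
  Sum.elim id (Sum.elim (fun a => D.w a.1 a.2) id)

/-- The successor of a point of a trajectory: the next point, or the hub over the target. -/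
def nxt (D : LiftData V J) (a : J × Fin D.L) : D.Node :=
  if h : (a.2 : ℕ) + 1 < D.L then D.path (a.1, ⟨a.2 + 1, h⟩) else D.hub (D.w a.1 D.L)

/-- The stationary mass of a point of a trajectory. -/
noncomputable def pathMass (D : LiftData V J) (a : J × Fin D.L) : ℝ :=
  D.η * D.x a.1 * (1 - D.ρ) ^ ((a.2 : ℕ) + 1)

/-- The stationary mass of the residual copy of `v`. -/
noncomputable def resMass (D : LiftData V J) (v : V) : ℝ :=
  D.π v - D.η / Fintype.card V - ∑ a, if D.w a.1 a.2 = v then D.pathMass a else 0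

/-- The part of the flow from `u` to `v` that is carried by trajectories. -/
noncomputable def pathFlow (D : LiftData V J) (u v : V) : ℝ :=
  ∑ a : J × Fin D.L, if D.w a.1 a.2 = u ∧ D.w a.1 (a.2 + 1) = v then (1 - D.ρ) * D.pathMass a else 0

/-- The off-diagonal transition probabilities between residual copies, which carry the rest of the
flow. -/
noncomputable def resOff (D : LiftData V J) (u v : V) : ℝ :=
  if u = v then 0 else (D.Q u v - D.pathFlow u v) / ((1 - D.ρ) * D.resMass u)

/-- The transition probabilities between residual copies. -/
noncomputable def resStep (D : LiftData V J) (u v : V) : ℝ :=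
  D.resOff u v + if u = v then 1 - ∑ v', D.resOff u v' else 0

/-- The probability that a reset over `v` leads to the hub. -/
noncomputable def theta (D : LiftData V J) (v : V) : ℝ :=
  D.η * (1 - (1 - D.ρ) ^ (D.L + 1)) / (Fintype.card V * D.ρ * D.π v)

/-- The chain without resets: from a hub choose a trajectory, then follow it to the next hub;
residual copies form a chain of their own. -/
noncomputable def move (D : LiftData V J) : Matrix D.Node D.Node ℝ := Matrix.of fun z =>
  match z with
  | Sum.inl u => Sum.elim (fun _ => 0) (Sum.elim
      (fun a => if (a.2 : ℕ) = 0 ∧ D.w a.1 0 = u then Fintype.card V * D.x a.1 else 0) fun _ => 0)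
  | Sum.inr (Sum.inl a) => fun y => if D.nxt a = y then 1 else 0
  | Sum.inr (Sum.inr u) => Sum.elim (fun _ => 0) (Sum.elim (fun _ => 0) fun v => D.resStep u v)

/-- The reset: jump to the hub or to the residual copy over the same vertex. -/
noncomputable def reset (D : LiftData V J) : Matrix D.Node D.Node ℝ := Matrix.of fun z =>
  Sum.elim (fun v => if D.proj z = v then D.theta v else 0) (Sum.elim (fun _ => 0)
    fun v => if D.proj z = v then 1 - D.theta v else 0)

/-- The lifted chain. -/
noncomputable def chain (D : LiftData V J) : Matrix D.Node D.Node ℝ :=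
  (1 - D.ρ) • D.move + D.ρ • D.reset

/-- The stationary distribution of the lifted chain. -/
noncomputable def dist (D : LiftData V J) : D.Node → ℝ :=
  Sum.elim (fun _ => D.η / Fintype.card V) (Sum.elim D.pathMass D.resMass)

/-- The conditions under which the construction yields a lifting, for trajectories that carry the
flow `M u v / |V|` with a doubly stochastic `M`. -/
structure Valid (D : LiftData V J) (q : V → V → ℝ) (M : V → V → ℝ) (Λ : ℝ) : Prop where
  paths : PathSystem q D.π M D.L Λ D.w D.x
  M_nonneg : ∀ u v, 0 ≤ M u v
  M_row : ∀ u, ∑ v, M u v = 1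
  M_col : ∀ v, ∑ u, M u v = 1
  L_pos : 0 < D.L
  ρ_pos : 0 < D.ρ
  ρ_lt : D.ρ < 1
  η_pos : 0 < D.η
  η_le : D.η * Λ ≤ 1
  π_pos : ∀ v, 0 < D.π v
  Q_row : ∀ u, ∑ v, D.Q u v = D.π u
  Q_col : ∀ v, ∑ u, D.Q u v = D.π v
  q_nonneg : ∀ u v, 0 ≤ q u v
  q_eq : ∀ u v, u ≠ v → q u v = D.Q u v
  q_row : ∀ u, ∑ v, q u v ≤ D.π u / 2
  room : ∀ v, D.π v / 2 ≤ (1 - D.ρ) * (D.π v - D.η / Fintype.card V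
    - D.η * (Λ * (D.π v / 2) + D.L / Fintype.card V))
  theta_le : ∀ v, D.theta v ≤ 1

lemma sum_node (D : LiftData V J) (F : D.Node → ℝ) :
    ∑ z, F z = ∑ v, F (D.hub v) + (∑ a, F (D.path a) + ∑ v, F (D.res v)) := by
  rw [Fintype.sum_sum_type, Fintype.sum_sum_type]

lemma sum_paths (D : LiftData V J) (F : J → ℕ → ℝ) :
    ∑ a : J × Fin D.L, F a.1 a.2 = ∑ j, ∑ s ∈ Finset.range D.L, F j s := by
  rw [Fintype.sum_prod_type]
  exact Finset.sum_congr rfl fun j _ => Fin.sum_univ_eq_sum_range (F j) D.L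

lemma proj_nxt (D : LiftData V J) (a : J × Fin D.L) : D.proj (D.nxt a) = D.w a.1 (a.2 + 1) := by
  unfold nxt
  split_ifs with h
  · rfl
  · have : (a.2 : ℕ) + 1 = D.L := by have := a.2.2; omega
    rw [this]
    rfl

lemma chain_apply (D : LiftData V J) (z y : D.Node) :
    D.chain z y = (1 - D.ρ) * D.move z y + D.ρ * D.reset z y := rfl

lemma move_hub_path (D : LiftData V J) (u : V) (a : J × Fin D.L) :
    D.move (D.hub u) (D.path a)
      = if (a.2 : ℕ) = 0 ∧ D.w a.1 0 = u then Fintype.card V * D.x a.1 else 0 := rfl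

lemma move_path (D : LiftData V J) (a : J × Fin D.L) (y : D.Node) :
    D.move (D.path a) y = if D.nxt a = y then 1 else 0 := rfl

lemma reset_hub (D : LiftData V J) (z : D.Node) (v : V) :
    D.reset z (D.hub v) = if D.proj z = v then D.theta v else 0 := rfl

lemma reset_res (D : LiftData V J) (z : D.Node) (v : V) :
    D.reset z (D.res v) = if D.proj z = v then 1 - D.theta v else 0 := rfl

namespace Valid

variable {D : LiftData V J} {q M : V → V → ℝ} {Λ : ℝ}

lemma pathMass_pos (hD : D.Valid q M Λ) (a : J × Fin D.L) : 0 < D.pathMass a := by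
  have h1 := hD.η_pos
  have h2 := hD.paths.pos a.1
  have h3 : 0 < 1 - D.ρ := by linarith [hD.ρ_lt]
  unfold pathMass
  positivity

lemma pathMass_le (hD : D.Valid q M Λ) (a : J × Fin D.L) : D.pathMass a ≤ D.η * D.x a.1 := by
  unfold pathMass
  have h1 := hD.η_pos
  have h2 := hD.paths.pos a.1
  exact mul_le_of_le_one_right (by positivity)
    (pow_le_one₀ (by linarith [hD.ρ_lt]) (by linarith [hD.ρ_pos]))

lemma occ_le (hD : D.Valid q M Λ) (v : V) :
    ∑ a, (if D.w a.1 a.2 = v then D.pathMass a else 0)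
      ≤ D.η * (Λ * (D.π v / 2) + D.L / Fintype.card V) := by
  calc ∑ a, (if D.w a.1 a.2 = v then D.pathMass a else 0)
      ≤ ∑ a : J × Fin D.L, D.η * (if D.w a.1 a.2 = v then D.x a.1 else 0) :=
        Finset.sum_le_sum fun a _ => by
          split_ifs
          · exact hD.pathMass_le a
          · simp
    _ = D.η * ∑ j, ∑ s ∈ Finset.range D.L, (if D.w j s = v then D.x j else 0) := by
        rw [← Finset.mul_sum, D.sum_paths fun j s => if D.w j s = v then D.x j else 0]
    _ ≤ _ := mul_le_mul_of_nonneg_left (hD.paths.occ v) hD.η_pos.le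

lemma pathFlow_nonneg (hD : D.Valid q M Λ) (u v : V) : 0 ≤ D.pathFlow u v :=
  Finset.sum_nonneg fun a _ => by
    split_ifs
    · exact mul_nonneg (by linarith [hD.ρ_lt]) (hD.pathMass_pos a).le
    · exact le_rfl

lemma pathFlow_le (hD : D.Valid q M Λ) {u v : V} (huv : u ≠ v) : D.pathFlow u v ≤ D.Q u v := by
  calc D.pathFlow u v ≤ ∑ a : J × Fin D.L,
        D.η * (if D.w a.1 a.2 = u ∧ D.w a.1 (a.2 + 1) = v then D.x a.1 else 0) :=
        Finset.sum_le_sum fun a _ => by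
          split_ifs
          · refine le_trans ?_ (hD.pathMass_le a)
            exact mul_le_of_le_one_left (hD.pathMass_pos a).le (by linarith [hD.ρ_pos])
          · simp
    _ = D.η * ∑ j, ∑ s ∈ Finset.range D.L,
          (if D.w j s = u ∧ D.w j (s + 1) = v then D.x j else 0) := by
        rw [← Finset.mul_sum,
          D.sum_paths fun j s => if D.w j s = u ∧ D.w j (s + 1) = v then D.x j else 0]
    _ ≤ D.η * (Λ * q u v) := mul_le_mul_of_nonneg_left (hD.paths.cong u v huv) hD.η_pos.le
    _ ≤ q u v := by
        rw [← mul_assoc]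
        exact mul_le_of_le_one_left (hD.q_nonneg u v) hD.η_le
    _ = D.Q u v := hD.q_eq u v huv

lemma resMass_ge (hD : D.Valid q M Λ) (v : V) : D.π v / 2 ≤ (1 - D.ρ) * D.resMass v := by
  refine (hD.room v).trans (mul_le_mul_of_nonneg_left ?_ (by linarith [hD.ρ_lt]))
  have := hD.occ_le v
  unfold resMass
  linarith

lemma resMass_pos (hD : D.Valid q M Λ) (v : V) : 0 < D.resMass v := by
  have h1 := hD.resMass_ge v
  have h2 := hD.π_pos v
  exact pos_of_mul_pos_right (by linarith) (by linarith [hD.ρ_lt] : 0 ≤ 1 - D.ρ)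

lemma resOff_nonneg (hD : D.Valid q M Λ) (u v : V) : 0 ≤ D.resOff u v := by
  unfold resOff
  split_ifs with h
  · exact le_rfl
  · have := hD.pathFlow_le h
    have := hD.resMass_pos u
    have := hD.ρ_lt
    exact div_nonneg (by linarith) (mul_nonneg (by linarith) (by linarith))

lemma sum_resOff_le (hD : D.Valid q M Λ) (u : V) : ∑ v, D.resOff u v ≤ 1 := by
  have h0 : 0 < (1 - D.ρ) * D.resMass u :=
    mul_pos (by linarith [hD.ρ_lt]) (hD.resMass_pos u)
  calc ∑ v, D.resOff u v ≤ ∑ v, q u v / ((1 - D.ρ) * D.resMass u) :=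
        Finset.sum_le_sum fun v _ => by
          unfold resOff
          split_ifs with h
          · exact div_nonneg (hD.q_nonneg _ _) h0.le
          · apply div_le_div_of_nonneg_right _ h0.le
            rw [hD.q_eq u v h]
            linarith [hD.pathFlow_nonneg u v]
    _ ≤ 1 := by
        rw [← Finset.sum_div, div_le_one h0]
        exact (hD.q_row u).trans (hD.resMass_ge u)

lemma resStep_nonneg (hD : D.Valid q M Λ) (u v : V) : 0 ≤ D.resStep u v := by
  unfold resStep
  have := hD.sum_resOff_le u
  refine add_nonneg (hD.resOff_nonneg u v) ?_
  split_ifs <;> linarith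

lemma sum_resStep (u : V) : ∑ v, D.resStep u v = 1 := by
  simp [resStep, Finset.sum_add_distrib]

lemma source_mass (hD : D.Valid q M Λ) (u : V) :
    ∑ j, (if D.w j 0 = u then D.x j else 0) = 1 / Fintype.card V := by
  have h1 : ∑ j, (if D.w j 0 = u then D.x j else 0)
      = ∑ v, ∑ j, if D.w j 0 = u ∧ D.w j D.L = v then D.x j else 0 := by
    rw [Finset.sum_comm]
    refine Finset.sum_congr rfl fun j _ => ?_
    by_cases h : D.w j 0 = u <;> simp [h]
  rw [h1, Finset.sum_congr rfl fun v _ => hD.paths.demand u v, ← Finset.sum_div, hD.M_row]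

lemma target_mass (hD : D.Valid q M Λ) (v : V) :
    ∑ j, (if D.w j D.L = v then D.x j else 0) = 1 / Fintype.card V := by
  have h1 : ∑ j, (if D.w j D.L = v then D.x j else 0)
      = ∑ u, ∑ j, if D.w j 0 = u ∧ D.w j D.L = v then D.x j else 0 := by
    rw [Finset.sum_comm]
    refine Finset.sum_congr rfl fun j _ => ?_
    by_cases h : D.w j D.L = v <;> simp [h]
  rw [h1, Finset.sum_congr rfl fun u _ => hD.paths.demand u v, ← Finset.sum_div, hD.M_col]

lemma card_pos (_hD : D.Valid q M Λ) (v : V) : (0 : ℝ) < Fintype.card V := by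
  exact_mod_cast Fintype.card_pos_iff.mpr ⟨v⟩

lemma theta_nonneg (hD : D.Valid q M Λ) (v : V) : 0 ≤ D.theta v := by
  have h1 := hD.η_pos
  have h2 := hD.ρ_pos
  have h3 := hD.π_pos v
  have h4 : (1 - D.ρ) ^ (D.L + 1) ≤ 1 :=
    pow_le_one₀ (by linarith [hD.ρ_lt]) (by linarith)
  unfold theta
  exact div_nonneg (mul_nonneg h1.le (by linarith)) (by positivity)

/-- Summing over the first points of the trajectories. -/
lemma sum_first (hD : D.Valid q M Λ) (F : J × Fin D.L → ℝ) (hF : ∀ a, (a.2 : ℕ) ≠ 0 → F a = 0) :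
    ∑ a, F a = ∑ j, F (j, ⟨0, hD.L_pos⟩) := by
  rw [Fintype.sum_prod_type]
  refine Finset.sum_congr rfl fun j _ => ?_
  refine Finset.sum_eq_single _ (fun s _ hs => hF _ ?_) (by simp)
  intro h
  exact hs (Fin.ext h)

lemma move_rowStochastic (hD : D.Valid q M Λ) : RowStochastic D.move := by
  constructor
  · rintro (u | a | u) (v | b | v)
    · exact le_rfl
    · rw [move_hub_path]
      split_ifs
      · exact mul_nonneg (Nat.cast_nonneg _) (hD.paths.pos _).le
      · exact le_rfl
    · exact le_rfl
    · rw [move_path]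
      split_ifs <;> norm_num
    · rw [move_path]
      split_ifs <;> norm_num
    · rw [move_path]
      split_ifs <;> norm_num
    · exact le_rfl
    · exact le_rfl
    · exact hD.resStep_nonneg u v
  · rintro (u | a | u)
    · rw [sum_node]
      change ∑ v : V, (0 : ℝ) + (∑ a : J × Fin D.L,
        (if (a.2 : ℕ) = 0 ∧ D.w a.1 0 = u then Fintype.card V * D.x a.1 else 0) + ∑ v : V, (0 : ℝ)) = 1
      rw [hD.sum_first _ fun a ha => by simp [ha]]
      have h1 := hD.source_mass u
      have h2 := hD.card_pos u
      simp only [Finset.sum_const_zero, zero_add, add_zero, true_and]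
      have h3 : ∀ j, (if D.w j 0 = u then (Fintype.card V : ℝ) * D.x j else 0)
          = Fintype.card V * if D.w j 0 = u then D.x j else 0 := fun j => by split_ifs <;> simp
      simp_rw [h3, ← Finset.mul_sum, h1]
      field_simp
    · change ∑ y, (if D.nxt a = y then (1 : ℝ) else 0) = 1
      simp
    · rw [sum_node]
      change ∑ v : V, (0 : ℝ) + (∑ a : J × Fin D.L, (0 : ℝ) + ∑ v, D.resStep u v) = 1
      simp [sum_resStep]

lemma reset_rowStochastic (hD : D.Valid q M Λ) : RowStochastic D.reset := by
  constructor
  · rintro z (v | b | v)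
    · rw [reset_hub]
      split_ifs
      exacts [hD.theta_nonneg v, le_rfl]
    · exact le_rfl
    · rw [reset_res]
      have := hD.theta_le v
      split_ifs <;> linarith
  · intro z
    rw [sum_node]
    change ∑ v, (if D.proj z = v then D.theta v else 0) + (∑ a : J × Fin D.L, (0 : ℝ)
      + ∑ v, if D.proj z = v then 1 - D.theta v else 0) = 1
    simp

lemma chain_rowStochastic (hD : D.Valid q M Λ) : RowStochastic D.chain := by
  have h1 := hD.move_rowStochastic
  have h2 := hD.reset_rowStochastic
  have h3 := hD.ρ_pos
  have h4 : 0 ≤ 1 - D.ρ := by linarith [hD.ρ_lt]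
  refine ⟨fun z y => ?_, fun z => ?_⟩
  · rw [chain_apply]
    exact add_nonneg (mul_nonneg h4 (h1.1 _ _)) (mul_nonneg h3.le (h2.1 _ _))
  · simp_rw [chain_apply]
    rw [Finset.sum_add_distrib, ← Finset.mul_sum, ← Finset.mul_sum, h1.2, h2.2]
    ring

lemma dist_pos (hD : D.Valid q M Λ) (z : D.Node) : 0 < D.dist z := by
  rcases z with u | a | u
  · exact div_pos hD.η_pos (hD.card_pos u)
  · exact hD.pathMass_pos a
  · exact hD.resMass_pos u

/-- Summation over a fiber of the projection. -/
lemma sum_fiber (D : LiftData V J) (F : D.Node → ℝ) (u : V) :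
    ∑ z ∈ Finset.univ.filter (fun z => D.proj z = u), F z
      = F (D.hub u) + (∑ a, (if D.w a.1 a.2 = u then F (D.path a) else 0) + F (D.res u)) := by
  rw [Finset.sum_filter, sum_node]
  change ∑ v, (if v = u then F (D.hub v) else 0)
    + (∑ a, (if D.w a.1 a.2 = u then F (D.path a) else 0)
    + ∑ v, if v = u then F (D.res v) else 0) = _
  simp

lemma dist_fiber (u : V) :
    ∑ z ∈ Finset.univ.filter (fun z => D.proj z = u), D.dist z = D.π u := by
  rw [sum_fiber]
  change D.η / Fintype.card V + (∑ a, (if D.w a.1 a.2 = u then D.pathMass a else 0)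
    + D.resMass u) = D.π u
  unfold resMass
  ring

/-- The probability to move from a state to the fiber over `v`. -/
lemma move_fiber (hD : D.Valid q M Λ) (z : D.Node) (v : V) :
    ∑ y ∈ Finset.univ.filter (fun y => D.proj y = v), D.move z y
      = Sum.elim (fun u => if u = v then 1 else 0) (Sum.elim
        (fun a => if D.w a.1 (a.2 + 1) = v then 1 else 0) (fun u => D.resStep u v)) z := by
  rcases z with u | a | u
  · by_cases h : u = v
    · subst h
      have h1 := hD.move_rowStochastic.2 (D.hub u)
      simp only [Sum.elim_inl, if_true]
      rw [← h1, sum_node, sum_fiber]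
      congr 1
      · exact (Finset.sum_const_zero).symm
      congr 1
      · refine Finset.sum_congr rfl fun a _ => ?_
        change (if D.w a.1 a.2 = u then (if (a.2 : ℕ) = 0 ∧ D.w a.1 0 = u then
          (Fintype.card V : ℝ) * D.x a.1 else 0) else 0) = (if (a.2 : ℕ) = 0 ∧ D.w a.1 0 = u then
          (Fintype.card V : ℝ) * D.x a.1 else 0)
        by_cases h2 : (a.2 : ℕ) = 0 ∧ D.w a.1 0 = u
        · rw [if_pos h2, h2.1, if_pos h2.2]
        · rw [if_neg h2, ite_self]
      · exact (Finset.sum_const_zero).symm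
    · simp only [Sum.elim_inl, if_neg h]
      rw [sum_fiber]
      change (0 : ℝ) + (∑ a : J × Fin D.L, (if D.w a.1 a.2 = v then
        (if (a.2 : ℕ) = 0 ∧ D.w a.1 0 = u then (Fintype.card V : ℝ) * D.x a.1 else 0) else 0) + 0) = 0
      rw [zero_add, add_zero]
      refine Finset.sum_eq_zero fun a _ => ?_
      split_ifs with h1 h2
      · rw [h2.1] at h1
        exact absurd (h2.2.symm.trans h1) h
      · rfl
      · rfl
  · change ∑ y ∈ Finset.univ.filter (fun y => D.proj y = v), (if D.nxt a = y then (1 : ℝ) else 0)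
      = if D.w a.1 (a.2 + 1) = v then 1 else 0
    rw [Finset.sum_ite_eq]
    simp only [Finset.mem_filter, Finset.mem_univ, true_and, proj_nxt]
  · rw [sum_fiber]
    change (0 : ℝ) + (∑ a : J × Fin D.L, (if D.w a.1 a.2 = v then 0 else 0) + D.resStep u v)
      = D.resStep u v
    simp

lemma reset_fiber (z : D.Node) (v : V) :
    ∑ y ∈ Finset.univ.filter (fun y => D.proj y = v), D.reset z y
      = if D.proj z = v then 1 else 0 := by
  rw [sum_fiber]
  change (if D.proj z = v then D.theta v else 0) + (∑ a : J × Fin D.L,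
    (if D.w a.1 a.2 = v then 0 else 0) + if D.proj z = v then 1 - D.theta v else 0) = _
  split_ifs <;> simp

lemma flow_eq_of_ne (hD : D.Valid q M Λ) {u v : V} (huv : u ≠ v) :
    ∑ z ∈ Finset.univ.filter (fun z => D.proj z = u),
      ∑ y ∈ Finset.univ.filter (fun y => D.proj y = v), D.dist z * D.chain z y = D.Q u v := by
  have h1 : ∀ z ∈ Finset.univ.filter (fun z => D.proj z = u),
      ∑ y ∈ Finset.univ.filter (fun y => D.proj y = v), D.dist z * D.chain z y
        = D.dist z * ((1 - D.ρ) * Sum.elim (fun u => if u = v then 1 else 0) (Sum.elim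
        (fun a => if D.w a.1 (a.2 + 1) = v then 1 else 0) (fun u => D.resStep u v)) z) := by
    intro z hz
    rw [Finset.mem_filter] at hz
    simp_rw [chain_apply]
    rw [← Finset.mul_sum, Finset.sum_add_distrib, ← Finset.mul_sum, ← Finset.mul_sum,
      hD.move_fiber, reset_fiber, hz.2, if_neg huv, mul_zero, add_zero]
  rw [Finset.sum_congr rfl h1, sum_fiber]
  simp only [Sum.elim_inl, Sum.elim_inr, if_neg huv, mul_zero, zero_add]
  have h2 : ∑ a : J × Fin D.L, (if D.w a.1 a.2 = u then D.dist (D.path a) *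
      ((1 - D.ρ) * if D.w a.1 (a.2 + 1) = v then 1 else 0) else 0) = D.pathFlow u v := by
    unfold pathFlow
    refine Finset.sum_congr rfl fun a _ => ?_
    change (if D.w a.1 a.2 = u then D.pathMass a *
      ((1 - D.ρ) * if D.w a.1 (a.2 + 1) = v then 1 else 0) else 0) = _
    by_cases h3 : D.w a.1 a.2 = u <;> by_cases h4 : D.w a.1 (a.2 + 1) = v <;> simp [h3, h4, mul_comm]
  rw [h2]
  change D.pathFlow u v + D.resMass u * ((1 - D.ρ) * D.resStep u v) = D.Q u v
  unfold resStep resOff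
  simp only [if_neg huv, add_zero]
  have h3 := hD.resMass_pos u
  have h4 : 0 < 1 - D.ρ := by linarith [hD.ρ_lt]
  field_simp
  ring

lemma flow_eq (hD : D.Valid q M Λ) (u v : V) :
    ∑ z ∈ Finset.univ.filter (fun z => D.proj z = u),
      ∑ y ∈ Finset.univ.filter (fun y => D.proj y = v), D.dist z * D.chain z y = D.Q u v := by
  by_cases huv : u = v
  swap
  · exact hD.flow_eq_of_ne huv
  subst huv
  -- the diagonal flow is what remains of the row sum
  have h1 : ∑ v, ∑ z ∈ Finset.univ.filter (fun z => D.proj z = u),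
      ∑ y ∈ Finset.univ.filter (fun y => D.proj y = v), D.dist z * D.chain z y = ∑ v, D.Q u v := by
    rw [hD.Q_row, Finset.sum_comm, ← dist_fiber (D := D) u]
    refine Finset.sum_congr rfl fun z _ => ?_
    rw [Finset.sum_fiberwise, ← Finset.mul_sum, hD.chain_rowStochastic.2, mul_one]
  rw [← Finset.add_sum_erase _ _ (Finset.mem_univ u),
    ← Finset.add_sum_erase Finset.univ (fun v => D.Q u v) (Finset.mem_univ u),
    Finset.sum_congr rfl fun v hv => hD.flow_eq_of_ne (Finset.ne_of_mem_erase hv).symm] at h1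
  exact add_right_cancel h1

end Valid

lemma nxt_eq_hub (D : LiftData V J) (a : J × Fin D.L) (v : V) :
    D.nxt a = D.hub v ↔ (a.2 : ℕ) + 1 = D.L ∧ D.w a.1 D.L = v := by
  unfold nxt
  have := a.2.2
  split_ifs with h
  · simp only [false_iff, not_and]
    omega
  · simp only [Sum.inl.injEq]
    constructor
    · exact fun h' => ⟨by omega, h'⟩
    · exact fun h' => h'.2

lemma nxt_eq_path (D : LiftData V J) (a b : J × Fin D.L) :
    D.nxt a = D.path b ↔ a.1 = b.1 ∧ (a.2 : ℕ) + 1 = b.2 := by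
  unfold nxt
  have := b.2.2
  rcases b with ⟨j, s⟩
  split_ifs with h
  · simp only [Sum.inr.injEq, Sum.inl.injEq, Prod.mk.injEq, Fin.ext_iff]
  · simp only [false_iff, not_and]
    intro _
    omega

namespace Valid

variable {D : LiftData V J} {q M : V → V → ℝ} {Λ : ℝ}

lemma inflow_split (z : D.Node) :
    ∑ y, D.dist y * D.chain y z = (1 - D.ρ) * ∑ y, D.dist y * D.move y z
      + D.ρ * ∑ y, D.dist y * D.reset y z := by
  rw [Finset.mul_sum, Finset.mul_sum, ← Finset.sum_add_distrib]
  refine Finset.sum_congr rfl fun y _ => ?_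
  rw [chain_apply]
  ring

lemma inflow_hub (hD : D.Valid q M Λ) (v : V) :
    ∑ y, D.dist y * D.chain y (D.hub v) = D.dist (D.hub v) := by
  have h1 : ∑ y, D.dist y * D.move y (D.hub v)
      = D.η * (1 - D.ρ) ^ D.L * (1 / Fintype.card V) := by
    rw [sum_node]
    change ∑ u : V, D.η / Fintype.card V * 0
      + (∑ a, D.pathMass a * (if D.nxt a = D.hub v then 1 else 0)
      + ∑ u, D.resMass u * 0) = _
    simp only [mul_zero, Finset.sum_const_zero, zero_add, add_zero]
    rw [← hD.target_mass v, Fintype.sum_prod_type, Finset.mul_sum]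
    refine Finset.sum_congr rfl fun j _ => ?_
    have hL := hD.L_pos
    rw [Finset.sum_eq_single (⟨D.L - 1, by omega⟩ : Fin D.L)]
    · simp only [nxt_eq_hub, pathMass]
      rw [Nat.sub_add_cancel hL]
      by_cases h : D.w j D.L = v
      · simp only [h, and_self, if_true]
        ring
      · simp [h]
    · intro s _ hs
      rw [if_neg, mul_zero]
      rw [nxt_eq_hub]
      rintro ⟨h, -⟩
      apply hs
      rw [Fin.ext_iff]
      simp only at h ⊢
      omega
    · simp
  have h2 : ∑ y, D.dist y * D.reset y (D.hub v) = D.π v * D.theta v := by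
    rw [← dist_fiber (D := D) v, Finset.sum_mul, Finset.sum_filter]
    refine Finset.sum_congr rfl fun y _ => ?_
    rw [reset_hub]
    split_ifs <;> simp
  rw [inflow_split, h1, h2]
  change _ = D.η / Fintype.card V
  have h3 := hD.card_pos v
  have h4 := hD.π_pos v
  have h5 := hD.ρ_pos
  unfold theta
  rw [pow_succ]
  field_simp
  ring

lemma inflow_path (hD : D.Valid q M Λ) (b : J × Fin D.L) :
    ∑ y, D.dist y * D.chain y (D.path b) = D.dist (D.path b) := by
  have h2 : ∑ y, D.dist y * D.reset y (D.path b) = 0 :=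
    Finset.sum_eq_zero fun y _ => mul_zero _
  have h3 := hD.card_pos (D.w b.1 0)
  rw [inflow_split, h2, mul_zero, add_zero, sum_node]
  change (1 - D.ρ) * (∑ u : V, D.η / Fintype.card V
    * (if (b.2 : ℕ) = 0 ∧ D.w b.1 0 = u then Fintype.card V * D.x b.1 else 0)
    + (∑ a, D.pathMass a * (if D.nxt a = D.path b then 1 else 0)
    + ∑ u, D.resMass u * 0)) = D.pathMass b
  simp only [nxt_eq_path, mul_zero, Finset.sum_const_zero, add_zero]
  rcases b with ⟨j, s, hs⟩
  rcases s with _ | s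
  · simp only [true_and, Nat.add_one_ne_zero, and_false, if_false, mul_zero, Finset.sum_const_zero,
      add_zero, mul_ite, Finset.sum_ite_eq, Finset.mem_univ, if_true, pathMass]
    field_simp
    simp
    ring
  · simp only [Nat.add_one_ne_zero, false_and, if_false, mul_zero, Finset.sum_const_zero, zero_add]
    rw [Finset.sum_eq_single (j, ⟨s, by omega⟩)]
    · simp only [and_self, if_true, pathMass, mul_one]
      ring
    · rintro ⟨j', s'⟩ _ hne
      rw [if_neg, mul_zero]
      rintro ⟨h1, h4⟩
      apply hne
      simp only at h1 h4
      rw [Prod.mk.injEq, Fin.ext_iff]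
      exact ⟨h1, by simp only; omega⟩
    · simp

/-- Stationarity at the residual copies follows from stationarity at the other states, because the
projected flow is that of the given chain. -/
lemma stationary (hD : D.Valid q M Λ) : Stationary D.chain D.dist := by
  rintro (v | b | v)
  · exact hD.inflow_hub v
  · exact hD.inflow_path b
  · have h1 : ∑ z ∈ Finset.univ.filter (fun z => D.proj z = v), ∑ y, D.dist y * D.chain y z
        = ∑ z ∈ Finset.univ.filter (fun z => D.proj z = v), D.dist z := by
      rw [dist_fiber, ← hD.Q_col, Finset.sum_comm,
        ← Finset.sum_fiberwise (s := Finset.univ) (g := D.proj)]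
      exact Finset.sum_congr rfl fun u _ => hD.flow_eq u v
    rw [sum_fiber, sum_fiber, hD.inflow_hub] at h1
    simp_rw [hD.inflow_path] at h1
    linarith

lemma resStep_support (hD : D.Valid q M Λ) {u v : V} (huv : u ≠ v) (h : D.resStep u v ≠ 0) :
    q u v ≠ 0 := by
  intro hq
  apply h
  have h1 := hD.pathFlow_le huv
  have h2 := hD.pathFlow_nonneg u v
  rw [hD.q_eq u v huv] at hq
  have h3 : D.pathFlow u v = 0 := by linarith
  simp [resStep, resOff, huv, hq, h3]

/-- The possible transitions of the lifted chain. -/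
lemma support (hD : D.Valid q M Λ) {z y : D.Node} (h : 0 < D.chain z y) :
    y = D.hub (D.proj z) ∨ y = D.res (D.proj z) ∨ (∃ a, z = D.path a ∧ y = D.nxt a) ∨
      (∃ j, z = D.hub (D.w j 0) ∧ y = D.path (j, ⟨0, hD.L_pos⟩)) ∨
      ∃ u v, z = D.res u ∧ y = D.res v ∧ (u = v ∨ q u v ≠ 0) := by
  have h1 : D.move z y ≠ 0 ∨ D.reset z y ≠ 0 := by
    by_contra hcon
    push Not at hcon
    rw [chain_apply, hcon.1, hcon.2] at h
    simp at h
  rcases h1 with h1 | h1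
  · rcases z with u | a | u
    · rcases y with v | b | v
      · exact absurd rfl h1
      · rw [show (Sum.inl u : D.Node) = D.hub u from rfl,
          show (Sum.inr (Sum.inl b) : D.Node) = D.path b from rfl, move_hub_path] at h1
        have h2 := (ite_ne_right_iff.mp h1).1
        refine Or.inr (Or.inr (Or.inr (Or.inl ⟨b.1, by rw [h2.2], ?_⟩)))
        rcases b with ⟨j, s⟩
        simp only [Sum.inr.injEq, Sum.inl.injEq, Prod.mk.injEq, true_and]
        exact Fin.ext h2.1
      · exact absurd rfl h1
    · rw [show (Sum.inr (Sum.inl a) : D.Node) = D.path a from rfl, move_path] at h1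
      exact Or.inr (Or.inr (Or.inl ⟨a, rfl, (ite_ne_right_iff.mp h1).1.symm⟩))
    · rcases y with v | b | v
      · exact absurd rfl h1
      · exact absurd rfl h1
      · refine Or.inr (Or.inr (Or.inr (Or.inr ⟨u, v, rfl, rfl, ?_⟩)))
        by_cases huv : u = v
        · exact Or.inl huv
        · exact Or.inr (hD.resStep_support huv h1)
  · rcases y with v | b | v
    · rw [show (Sum.inl v : D.Node) = D.hub v from rfl, reset_hub] at h1
      exact Or.inl (by rw [(ite_ne_right_iff.mp h1).1])
    · exact absurd rfl h1
    · rw [show (Sum.inr (Sum.inr v) : D.Node) = D.res v from rfl, reset_res] at h1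
      exact Or.inr (Or.inl (by rw [(ite_ne_right_iff.mp h1).1]))

lemma conformant (hD : D.Valid q M Λ) {z y : D.Node} (h : 0 < D.chain z y) :
    D.proj z = D.proj y ∨ q (D.proj z) (D.proj y) ≠ 0 := by
  rcases hD.support h with rfl | rfl | ⟨a, rfl, rfl⟩ | ⟨j, rfl, rfl⟩ | ⟨u, v, rfl, rfl, huv⟩
  · exact Or.inl rfl
  · exact Or.inl rfl
  · rw [proj_nxt]
    exact hD.paths.step a.1 a.2
  · exact Or.inl rfl
  · exact huv

lemma size_le (hD : D.Valid q M Λ) :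
    {p : D.Node × D.Node | p.1 ≠ p.2 ∧ 0 < D.chain p.1 p.2}.ncard
      ≤ 4 * Fintype.card V + 4 * (Fintype.card J * D.L)
        + (Finset.univ.filter fun a : V × V => q a.1 a.2 ≠ 0).card := by
  classical
  let Z := D.Node ⊕ D.Node ⊕ (J × Fin D.L) ⊕ J ⊕ {a : V × V // q a.1 a.2 ≠ 0}
  let φ : Z → D.Node × D.Node := Sum.elim (fun z => (z, D.hub (D.proj z))) (Sum.elim
    (fun z => (z, D.res (D.proj z))) (Sum.elim (fun a => (D.path a, D.nxt a)) (Sum.elim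
    (fun j => (D.hub (D.w j 0), D.path (j, ⟨0, hD.L_pos⟩)))
    (fun e => (D.res e.1.1, D.res e.1.2)))))
  have hsub : {p : D.Node × D.Node | p.1 ≠ p.2 ∧ 0 < D.chain p.1 p.2} ⊆ Set.range φ := by
    rintro ⟨z, y⟩ ⟨hne, hpos⟩
    simp only at hne hpos
    rcases hD.support hpos with rfl | rfl | ⟨a, rfl, rfl⟩ | ⟨j, rfl, rfl⟩ | ⟨u, v, rfl, rfl, huv⟩
    · exact ⟨Sum.inl z, rfl⟩
    · exact ⟨Sum.inr (Sum.inl z), rfl⟩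
    · exact ⟨Sum.inr (Sum.inr (Sum.inl a)), rfl⟩
    · exact ⟨Sum.inr (Sum.inr (Sum.inr (Sum.inl j))), rfl⟩
    · rcases huv with rfl | huv
      · exact absurd rfl hne
      · exact ⟨Sum.inr (Sum.inr (Sum.inr (Sum.inr ⟨(u, v), huv⟩))), rfl⟩
  have h1 : (Set.range φ).ncard ≤ Fintype.card Z := by
    rw [← Set.image_univ, ← Nat.card_eq_fintype_card, ← Set.ncard_univ]
    exact Set.ncard_image_le Set.finite_univ
  have h2 : Fintype.card Z = 4 * Fintype.card V + 3 * (Fintype.card J * D.L) + Fintype.card J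
      + (Finset.univ.filter fun a : V × V => q a.1 a.2 ≠ 0).card := by
    simp only [Z, Fintype.card_sum, Fintype.card_prod, Fintype.card_fin, Fintype.card_subtype]
    ring
  have h3 : Fintype.card J ≤ Fintype.card J * D.L := Nat.le_mul_of_pos_right _ hD.L_pos
  have h4 := Set.ncard_le_ncard hsub (Set.toFinite _)
  omega

/-- Following a trajectory from hub to hub realizes a step of `M`. -/
lemma hub_step (hD : D.Valid q M Λ) (u v : V) :
    M u v ≤ (D.move ^ (D.L + 1)) (D.hub u) (D.hub v) := by
  have hmv := hD.move_rowStochastic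
  have hL := hD.L_pos
  have hrun : ∀ (s : ℕ) (hs : s < D.L) (j : J),
      (if D.w j 0 = u then (Fintype.card V : ℝ) * D.x j else 0)
        ≤ (D.move ^ (s + 1)) (D.hub u) (D.path (j, ⟨s, hs⟩)) := by
    intro s
    induction s with
    | zero =>
      intro hs j
      rw [zero_add, pow_one, move_hub_path]
      simp
    | succ s ih =>
      intro hs j
      refine (ih (by omega) j).trans ?_
      rw [pow_succ _ (s + 1), Matrix.mul_apply]
      refine le_trans (le_of_eq ?_) (Finset.single_le_sum (f := fun z =>
        (D.move ^ (s + 1)) (D.hub u) z * D.move z (D.path (j, ⟨s + 1, hs⟩)))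
        (fun z _ => mul_nonneg ((hmv.pow _).1 _ _) (hmv.1 _ _))
        (Finset.mem_univ (D.path (j, ⟨s, by omega⟩))))
      rw [move_path, if_pos, mul_one]
      rw [nxt_eq_path]
      exact ⟨rfl, rfl⟩
  have hn := hD.card_pos u
  have h1 : M u v = ∑ j, if D.w j D.L = v then
      (if D.w j 0 = u then (Fintype.card V : ℝ) * D.x j else 0) else 0 := by
    have h2 := hD.paths.demand u v
    rw [eq_div_iff hn.ne'] at h2
    rw [← h2, Finset.sum_mul]
    refine Finset.sum_congr rfl fun j _ => ?_
    by_cases h3 : D.w j 0 = u <;> by_cases h4 : D.w j D.L = v <;> simp [h3, h4, mul_comm]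
  rw [h1, pow_succ, Matrix.mul_apply]
  let last : J → D.Node := fun j => D.path (j, ⟨D.L - 1, by omega⟩)
  have hinj : Function.Injective last := by
    intro j j' h
    simp only [last, Sum.inr.injEq, Sum.inl.injEq, Prod.mk.injEq, and_true] at h
    exact h
  calc ∑ j, (if D.w j D.L = v then
        (if D.w j 0 = u then (Fintype.card V : ℝ) * D.x j else 0) else 0)
      ≤ ∑ j, (D.move ^ D.L) (D.hub u) (last j) * D.move (last j) (D.hub v) := by
        refine Finset.sum_le_sum fun j _ => ?_
        have hiff : D.nxt (j, ⟨D.L - 1, by omega⟩) = D.hub v ↔ D.w j D.L = v := by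
          rw [nxt_eq_hub]
          exact ⟨fun h => h.2, fun h => ⟨Nat.sub_add_cancel hL, h⟩⟩
        have h5 := hrun (D.L - 1) (by omega) j
        rw [Nat.sub_add_cancel hL] at h5
        change _ ≤ (D.move ^ D.L) (D.hub u) (D.path (j, ⟨D.L - 1, by omega⟩))
          * D.move (D.path (j, ⟨D.L - 1, by omega⟩)) (D.hub v)
        by_cases h : D.w j D.L = v
        · rw [move_path, if_pos h, if_pos (hiff.mpr h), mul_one]
          exact h5
        · rw [move_path, if_neg h, if_neg (mt hiff.mp h), mul_zero]
    _ = ∑ z ∈ Finset.univ.image last, (D.move ^ D.L) (D.hub u) z * D.move z (D.hub v) := by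
        rw [Finset.sum_image fun a _ b _ h => hinj h]
    _ ≤ _ := Finset.sum_le_univ_sum_of_nonneg fun z => mul_nonneg ((hmv.pow _).1 _ _) (hmv.1 _ _)

/-- Mixing of the lifted chain: after a reset to a hub, `k` trajectories in a row are completed with
probability at least `(1 - ρ) ^ ((L + 1) k)`, and then the hub is nearly uniform. -/
lemma mixing (hD : D.Valid q M Λ) (k S m : ℕ) (θ₀ c : ℝ)
    (hθ : ∀ v, θ₀ ≤ D.theta v)
    (hM : ∀ u v, 1 / (2 * (Fintype.card V : ℝ)) ≤ ((Matrix.of M) ^ k) u v)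
    (hπ : ∑ v, D.π v = 1)
    (hc : c ≤ θ₀ * (1 - D.ρ) ^ ((D.L + 1) * k) / 2 * (1 - (1 - D.ρ) ^ S))
    (hm : (1 - c) ^ m ≤ 1 / 4)
    (t : ℕ) (ht : ((D.L + 1) * k + S) * m ≤ t) (z : D.Node) :
    (1 / 2) * ∑ y, |(D.chain ^ t) z y - D.dist y| ≤ 1 / 4 := by
  have hch := hD.chain_rowStochastic
  have hmv := hD.move_rowStochastic
  have hrs := hD.reset_rowStochastic
  have hρ : 0 ≤ 1 - D.ρ := by linarith [hD.ρ_lt]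
  have hρ0 := hD.ρ_pos
  set N := (D.L + 1) * k with hN
  have hinj : Function.Injective D.hub := Sum.inl_injective
  have hub : ∀ u v, (1 - D.ρ) ^ N * (1 / (2 * (Fintype.card V : ℝ)))
      ≤ (D.chain ^ N) (D.hub u) (D.hub v) := by
    intro u v
    refine le_trans (mul_le_mul_of_nonneg_left ?_ (pow_nonneg hρ N))
      ((matrix_pow_mono hmv.1 (1 - D.ρ) hρ (A := D.chain) (fun x y => ?_) N).2 _ _)
    · refine (hM u v).trans ?_
      rw [hN, pow_mul]
      exact pow_restrict_le (hmv.pow _).1 D.hub hinj (Matrix.of M) hD.M_nonneg hD.hub_step k u v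
    · rw [chain_apply]
      have := mul_nonneg hρ0.le (hrs.1 x y)
      linarith
  have hκ : ∀ x v, θ₀ * ((1 - D.ρ) ^ N * (1 / (2 * (Fintype.card V : ℝ))))
      ≤ (D.reset * D.chain ^ N) x (D.hub v) := by
    intro x v
    rw [Matrix.mul_apply]
    refine le_trans ?_ (Finset.single_le_sum (f := fun z =>
        D.reset x z * (D.chain ^ N) z (D.hub v))
        (fun z _ => mul_nonneg (hrs.1 _ _) ((hch.pow _).1 _ _))
        (Finset.mem_univ (D.hub (D.proj x))))
    refine mul_le_mul ?_ (hub _ _) (by positivity) (hrs.1 _ _)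
    rw [reset_hub, if_pos rfl]
    exact hθ _
  obtain ⟨ν, hν, hνs⟩ := exists_minorant hch hmv hrs D.ρ hρ0.le hD.ρ_lt.le rfl D.hub hinj N _ hκ S
  have hn := hD.card_pos (D.proj z)
  have hνc : c ≤ ∑ y, ν y := by
    rw [hνs]
    refine hc.trans (le_of_eq ?_)
    field_simp
  have hν1 : ∑ y, ν y ≤ 1 := by
    rw [← (hch.pow (N + S)).2 z]
    exact Finset.sum_le_sum fun y _ => hν z y
  refine doeblin hch hD.stationary (fun x => (hD.dist_pos x).le) ?_ (N + S) m ν hν ?_ hν1 t ht z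
  · rw [← hπ, ← Finset.sum_fiberwise (s := Finset.univ) (g := D.proj)]
    exact Finset.sum_congr rfl fun u _ => dist_fiber u
  · exact (pow_le_pow_left₀ (by linarith) (by linarith) m).trans hm

end Valid

end LiftData

end Lift

/-! ### Conductance and the choice of parameters -/

section Conductance

variable {V : Type} [Fintype V] [DecidableEq V]

lemma conductance_mul_le {P : Matrix V V ℝ} {π : V → ℝ} (hP : RowStochastic P)
    (hπ : ∀ i, 0 < π i) (S : Finset V) :
    conductance P π * ((∑ i ∈ S, π i) * ∑ j ∈ Sᶜ, π j) ≤ ∑ i ∈ S, ∑ j ∈ Sᶜ, π i * P i j := by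
  have hnum : ∀ T : Finset V, 0 ≤ ∑ i ∈ T, ∑ j ∈ Tᶜ, π i * P i j := fun T =>
    Finset.sum_nonneg fun i _ => Finset.sum_nonneg fun j _ => mul_nonneg (hπ i).le (hP.1 i j)
  have hmass : ∀ T : Finset V, 0 ≤ ∑ i ∈ T, π i := fun T => Finset.sum_nonneg fun i _ => (hπ i).le
  rcases S.eq_empty_or_nonempty with rfl | hne
  · simp
  by_cases hu : S = Finset.univ
  · subst hu
    simp
  have hc : Sᶜ.Nonempty := by
    rwa [Finset.nonempty_iff_ne_empty, Ne, Finset.compl_eq_empty_iff]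
  have h1 : 0 < (∑ i ∈ S, π i) * ∑ j ∈ Sᶜ, π j :=
    mul_pos (Finset.sum_pos (fun i _ => hπ i) hne) (Finset.sum_pos (fun i _ => hπ i) hc)
  rw [← le_div_iff₀ h1]
  refine csInf_le ⟨0, ?_⟩ ⟨S, hne, hu, rfl⟩
  rintro x ⟨T, -, -, rfl⟩
  exact div_nonneg (hnum T) (mul_nonneg (hmass T) (hmass Tᶜ))

/-- A set without outgoing transitions is never left. -/
lemma pow_eq_zero_of_closed {P : Matrix V V ℝ} {S : Finset V}
    (h : ∀ i ∈ S, ∀ j ∉ S, P i j = 0) (t : ℕ) : ∀ i ∈ S, ∀ j ∉ S, (P ^ t) i j = 0 := by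
  induction t with
  | zero =>
    intro i hi j hj
    rw [pow_zero, Matrix.one_apply_ne]
    rintro rfl
    exact hj hi
  | succ t ih =>
    intro i hi j hj
    rw [pow_succ, Matrix.mul_apply]
    refine Finset.sum_eq_zero fun l _ => ?_
    by_cases hl : l ∈ S
    · rw [h l hl j hj, mul_zero]
    · rw [ih i hi l hl, zero_mul]

lemma conductance_pos [Nontrivial V] {P : Matrix V V ℝ} {π : V → ℝ} (hP : RowStochastic P)
    (hπ : ∀ i, 0 < π i) (hirr : ∀ i j : V, ∃ t : ℕ, 0 < (P ^ t) i j) : 0 < conductance P π := by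
  have hfin : {x : ℝ | ∃ S : Finset V, S.Nonempty ∧ S ≠ Finset.univ ∧
      x = (∑ i ∈ S, ∑ j ∈ Sᶜ, π i * P i j)
        / ((∑ i ∈ S, π i) * (∑ j ∈ Sᶜ, π j))}.Finite := by
    refine (Set.finite_range fun S : Finset V => (∑ i ∈ S, ∑ j ∈ Sᶜ, π i * P i j)
        / ((∑ i ∈ S, π i) * (∑ j ∈ Sᶜ, π j))).subset ?_
    rintro x ⟨S, -, -, rfl⟩
    exact ⟨S, rfl⟩
  obtain ⟨a, b, hab⟩ := exists_pair_ne V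
  have hne : {x : ℝ | ∃ S : Finset V, S.Nonempty ∧ S ≠ Finset.univ ∧
      x = (∑ i ∈ S, ∑ j ∈ Sᶜ, π i * P i j)
        / ((∑ i ∈ S, π i) * (∑ j ∈ Sᶜ, π j))}.Nonempty := by
    refine ⟨_, {a}, Finset.singleton_nonempty a, ?_, rfl⟩
    intro h
    have := Finset.mem_univ b
    rw [← h, Finset.mem_singleton] at this
    exact hab this.symm
  obtain ⟨S, hS, hSu, hx⟩ := hne.csInf_mem hfin
  unfold conductance
  rw [hx]
  have hc : Sᶜ.Nonempty := by
    rwa [Finset.nonempty_iff_ne_empty, Ne, Finset.compl_eq_empty_iff]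
  refine div_pos ?_ (mul_pos (Finset.sum_pos (fun i _ => hπ i) hS)
    (Finset.sum_pos (fun i _ => hπ i) hc))
  have hn : ∀ i j, 0 ≤ π i * P i j := fun i j => mul_nonneg (hπ i).le (hP.1 i j)
  refine lt_of_le_of_ne (Finset.sum_nonneg fun i _ => Finset.sum_nonneg fun j _ => hn i j) ?_
  intro h0
  have hz : ∀ i ∈ S, ∀ j ∉ S, P i j = 0 := by
    intro i hi j hj
    have h1 := (Finset.sum_eq_zero_iff_of_nonneg
      fun i _ => Finset.sum_nonneg fun j _ => hn i j).mp h0.symm i hi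
    have h2 := (Finset.sum_eq_zero_iff_of_nonneg fun j _ => hn i j).mp h1 j
      (Finset.mem_compl.mpr hj)
    exact (mul_eq_zero.mp h2).resolve_left (hπ i).ne'
  obtain ⟨i, hi⟩ := hS
  obtain ⟨j, hj⟩ := hc
  obtain ⟨t, ht⟩ := hirr i j
  rw [pow_eq_zero_of_closed hz t i hi j (Finset.mem_compl.mp hj)] at ht
  exact ht.false

/-- The off-diagonal ergodic flow of the chain `P`. -/
noncomputable def offFlow (P : Matrix V V ℝ) (π : V → ℝ) (u v : V) : ℝ :=
  if u = v then 0 else π u * P u v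

/-- The graph of the positive off-diagonal transitions of a reversible chain. -/
def flowGraph (P : Matrix V V ℝ) (π : V → ℝ)
    (hrev : ∀ i j, π i * P i j = π j * P j i) : SimpleGraph V where
  Adj u v := offFlow P π u v ≠ 0
  symm := ⟨fun u v h => by
    simp only [offFlow] at h ⊢
    rwa [hrev v u, if_congr (eq_comm (a := v) (b := u)) rfl rfl]⟩
  loopless := ⟨fun u h => h (by simp [offFlow])⟩

lemma network_of_chain [Nontrivial V] {P : Matrix V V ℝ} {π : V → ℝ} (hP : RowStochastic P)
    (hπ : ∀ i, 0 < π i) (hπ1 : ∑ i, π i = 1) (hirr : ∀ i j : V, ∃ t : ℕ, 0 < (P ^ t) i j)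
    (hrev : ∀ i j, π i * P i j = π j * P j i) (hlazy : ∀ i, (1 : ℝ) / 2 ≤ P i i) :
    Network (offFlow P π) π (conductance P π) (flowGraph P π hrev) where
  nonneg u v := by
    unfold offFlow
    split_ifs
    · exact le_rfl
    · exact mul_nonneg (hπ u).le (hP.1 u v)
  symm u v := by
    unfold offFlow
    rw [hrev u v, if_congr (eq_comm (a := u) (b := v)) rfl rfl]
  adj u v := Iff.rfl
  row u := by
    have h1 : ∑ v, offFlow P π u v = π u * ∑ v, P u v - π u * P u u := by
      rw [eq_sub_iff_add_eq, Finset.mul_sum, ← Finset.sum_erase_add _ _ (Finset.mem_univ u),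
        ← Finset.sum_erase_add _ (fun v => π u * P u v) (Finset.mem_univ u)]
      have h2 : offFlow P π u u = 0 := if_pos rfl
      rw [h2, add_zero]
      congr 1
      refine Finset.sum_congr rfl fun v hv => if_neg ?_
      exact (Finset.ne_of_mem_erase hv).symm
    rw [h1, hP.2 u]
    have := mul_le_mul_of_nonneg_left (hlazy u) (hπ u).le
    linarith
  pos := hπ
  total := hπ1
  phi_pos := conductance_pos hP hπ hirr
  expand S := by
    refine (conductance_mul_le hP hπ S).trans (le_of_eq ?_)
    refine Finset.sum_congr rfl fun i hi => Finset.sum_congr rfl fun j hj => ?_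
    unfold offFlow
    rw [if_neg]
    rintro rfl
    exact Finset.mem_compl.mp hj hi

lemma Network.singleton {q : V → V → ℝ} {π : V → ℝ} {Φ : ℝ} {H : SimpleGraph V}
    (net : Network q π Φ H) (v : V) : Φ * (π v * (1 - π v)) ≤ ∑ u, q v u := by
  have h1 := net.expand {v}
  have h2 : ∑ j ∈ ({v} : Finset V)ᶜ, π j = 1 - π v := by
    have := Finset.sum_add_sum_compl ({v} : Finset V) π
    rw [net.total, Finset.sum_singleton] at this
    linarith
  rw [Finset.sum_singleton, Finset.sum_singleton, h2] at h1
  exact h1.trans (Finset.sum_le_univ_sum_of_nonneg fun u => net.nonneg v u)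

lemma Network.lt_one [Nontrivial V] {q : V → V → ℝ} {π : V → ℝ} {Φ : ℝ} {H : SimpleGraph V}
    (net : Network q π Φ H) (v : V) : π v < 1 := by
  obtain ⟨u, hu⟩ := exists_ne v
  rw [← net.total, ← Finset.sum_erase_add _ _ (Finset.mem_univ v)]
  have : 0 < ∑ i ∈ Finset.univ.erase v, π i :=
    Finset.sum_pos (fun i _ => net.pos i) ⟨u, Finset.mem_erase.mpr ⟨hu, Finset.mem_univ u⟩⟩
  linarith

lemma Network.phi_le_one [Nontrivial V] {q : V → V → ℝ} {π : V → ℝ} {Φ : ℝ} {H : SimpleGraph V}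
    (net : Network q π Φ H) : Φ ≤ 1 := by
  obtain ⟨a, b, hab⟩ := exists_pair_ne V
  have hsum : π a + π b ≤ 1 := by
    rw [← net.total, ← Finset.sum_pair hab]
    exact Finset.sum_le_univ_sum_of_nonneg fun u => (net.pos u).le
  have key : ∀ v, π v ≤ 1 / 2 → Φ ≤ 1 := by
    intro v hv
    have h1 := (net.singleton v).trans (net.row v)
    have h2 := net.pos v
    have h3 := net.phi_pos
    have h4 : Φ * (1 - π v) ≤ 1 / 2 := by
      have : π v * (Φ * (1 - π v)) ≤ π v * (1 / 2) := by linarith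
      exact le_of_mul_le_mul_left this h2
    nlinarith
  rcases le_total (π a) (π b) with h | h
  · exact key a (by linarith)
  · exact key b (by linarith)

/-- Every vertex has an edge. -/
lemma Network.card_le_edges [Nontrivial V] {q : V → V → ℝ} {π : V → ℝ} {Φ : ℝ}
    {H : SimpleGraph V} (net : Network q π Φ H) :
    Fintype.card V ≤ (Finset.univ.filter fun a : V × V => q a.1 a.2 ≠ 0).card := by
  rw [← Finset.card_univ]
  refine Finset.card_le_card_of_surjOn Prod.fst ?_
  intro v _
  have h1 := net.singleton v
  have h2 : 0 < Φ * (π v * (1 - π v)) :=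
    mul_pos net.phi_pos (mul_pos (net.pos v) (by linarith [net.lt_one v]))
  obtain ⟨u, -, hu⟩ := Finset.exists_ne_zero_of_sum_ne_zero (h2.trans_le h1).ne'
  exact ⟨(v, u), by simpa using hu, rfl⟩

end Conductance

section Parameters

lemma exists_lengths (Φ π₀ : ℝ) (hΦ : 0 < Φ) (hΦ1 : Φ ≤ 1) (hπ : 0 < π₀) (hπ1 : π₀ ≤ 1) :
    ∃ k h : ℕ, 1 ≤ k ∧ (k : ℝ) ≤ 2 * (1 + Real.log (1 / π₀)) ∧ 1 < 2 ^ k * π₀ ∧ 32 ≤ h * Φ ∧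
      h * Φ ≤ 33 ∧ 4 < π₀ * (1 + Φ / 32) ^ (h * (k + 2)) := by
  have hlog : 0 ≤ Real.log (1 / π₀) := Real.log_nonneg (by rwa [le_div_iff₀ hπ, one_mul])
  have hl2 : (1 : ℝ) / 2 < Real.log 2 := by linarith [Real.log_two_gt_d9]
  set y := Real.log (1 / π₀) / Real.log 2 with hy
  have hy0 : 0 ≤ y := div_nonneg hlog (by linarith)
  have hy2 : y ≤ 2 * Real.log (1 / π₀) := by
    rw [hy, div_le_iff₀ (by linarith)]
    nlinarith
  set k := ⌊y⌋₊ + 1 with hk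
  have hk2 : 1 < 2 ^ k * π₀ := by
    have h1 : y < k := by
      rw [hk]
      push_cast
      exact Nat.lt_floor_add_one y
    rw [hy, div_lt_iff₀ (by linarith), ← Real.log_pow, Real.log_lt_log_iff (by positivity)
      (by positivity), div_lt_iff₀ hπ] at h1
    exact h1
  have hk1 : (k : ℝ) ≤ 2 * (1 + Real.log (1 / π₀)) := by
    have := Nat.floor_le hy0
    rw [hk]
    push_cast
    linarith
  have hh1 : 32 ≤ (⌈32 / Φ⌉₊ : ℝ) * Φ := by
    rw [← div_le_iff₀ hΦ]
    exact Nat.le_ceil _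
  have hh2 : (⌈32 / Φ⌉₊ : ℝ) * Φ ≤ 33 := by
    have h1 := (Nat.ceil_lt_add_one (by positivity : 0 ≤ 32 / Φ)).le
    have h2 := mul_le_mul_of_nonneg_right h1 hΦ.le
    rw [add_mul, div_mul_cancel₀ _ hΦ.ne'] at h2
    linarith
  refine ⟨k, ⌈32 / Φ⌉₊, by omega, hk1, hk2, hh1, hh2, ?_⟩
  have h3 : (2 : ℝ) ≤ (1 + Φ / 32) ^ ⌈32 / Φ⌉₊ := by
    have := one_add_mul_le_pow (by linarith : (-2 : ℝ) ≤ Φ / 32) ⌈32 / Φ⌉₊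
    linarith
  have h4 : (2 : ℝ) ^ (k + 2) ≤ (1 + Φ / 32) ^ (⌈32 / Φ⌉₊ * (k + 2)) := by
    rw [pow_mul]
    exact pow_le_pow_left₀ (by norm_num) h3 _
  have h5 := mul_le_mul_of_nonneg_left h4 hπ.le
  rw [pow_add] at h5
  linarith

/-- `(1 - ρ) ^ m ≤ 1 / (1 + m ρ)`, in multiplied-out form. -/
lemma one_sub_pow_mul_le (ρ : ℝ) (h0 : 0 ≤ ρ) (h1 : ρ ≤ 1) (m : ℕ) :
    (1 - ρ) ^ m * (1 + m * ρ) ≤ 1 := by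
  have h2 := one_add_mul_le_pow (by linarith : (-2 : ℝ) ≤ ρ) m
  have h3 : 0 ≤ (1 - ρ) ^ m := pow_nonneg (by linarith) m
  calc (1 - ρ) ^ m * (1 + m * ρ) ≤ (1 - ρ) ^ m * (1 + ρ) ^ m := mul_le_mul_of_nonneg_left h2 h3
    _ = (1 - ρ ^ 2) ^ m := by rw [← mul_pow]; ring
    _ ≤ 1 := pow_le_one₀ (by nlinarith) (by nlinarith)

lemma one_sub_le_pow (ρ : ℝ) (h1 : ρ ≤ 1) (m : ℕ) : 1 - m * ρ ≤ (1 - ρ) ^ m := by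
  have := one_add_mul_le_pow (by linarith : (-2 : ℝ) ≤ -ρ) m
  rw [← sub_eq_add_neg] at this
  linarith

end Parameters

/-! ### Assembly -/

section Assembly

variable {V J : Type} [Fintype V] [DecidableEq V] [Fintype J] [DecidableEq J]

/-- The lifted chain of a reversible chain, with reset probability `1 / (4 (L + 1) k)` and hub mass
`1 / (16 K (L + 1))`. -/
noncomputable def liftOf (P : Matrix V V ℝ) (π : V → ℝ) (K : ℝ) (k L : ℕ) (w : J → ℕ → V)
    (x : J → ℝ) : LiftData V J where
  w := w
  x := x
  L := L
  ρ := 1 / (4 * (L + 1) * k)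
  η := 1 / (16 * K * (L + 1))
  π := π
  Q u v := π u * P u v

lemma liftOf_theta_bounds (P : Matrix V V ℝ) (π : V → ℝ) (K : ℝ) (k L : ℕ) (w : J → ℕ → V)
    (x : J → ℝ) (hK : 1 ≤ K) (hk : 1 ≤ k) (v : V) (hπ : 0 < π v)
    (hn1 : 1 ≤ K * π v * Fintype.card V) (hn2 : Fintype.card V * π v ≤ K) :
    1 / (32 * K ^ 2) ≤ (liftOf P π K k L w x).theta v ∧ (liftOf P π K k L w x).theta v ≤ 1 := by
  have hk' : (1 : ℝ) ≤ k := by exact_mod_cast hk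
  have hn : (0 : ℝ) < Fintype.card V := by exact_mod_cast Fintype.card_pos_iff.mpr ⟨v⟩
  set ρ : ℝ := 1 / (4 * (L + 1) * k) with hρ
  set N : ℝ := (Fintype.card V : ℝ) with hN
  have hρ0 : 0 < ρ := by positivity
  have hLρ : ((L + 1 : ℕ) : ℝ) * ρ = 1 / (4 * k) := by
    rw [hρ]
    push_cast
    field_simp
  have hs1 : ((L + 1 : ℕ) : ℝ) * ρ ≤ 1 := by
    rw [hLρ, div_le_one (by positivity)]
    linarith
  have hρ1 : ρ ≤ 1 := by
    refine le_trans ?_ hs1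
    push_cast
    nlinarith [(Nat.cast_nonneg L : (0 : ℝ) ≤ L)]
  have hs0 : 0 < ((L + 1 : ℕ) : ℝ) * ρ := by positivity
  have hlow := one_sub_pow_mul_le ρ hρ0.le hρ1 (L + 1)
  have hup := one_sub_le_pow ρ hρ1 (L + 1)
  have hp0 : 0 ≤ (1 - ρ) ^ (L + 1) := pow_nonneg (by linarith) _
  set s := ((L + 1 : ℕ) : ℝ) * ρ with hs
  set A := (1 - ρ) ^ (L + 1) with hA
  have hlow2 : s / 2 ≤ 1 - A := by nlinarith
  have hup2 : 1 - A ≤ s := by linarith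
  have hth : (liftOf P π K k L w x).theta v = (1 - A) / s * (1 / (16 * K * (N * π v))) := by
    unfold LiftData.theta
    change 1 / (16 * K * ((L : ℝ) + 1)) * (1 - A) / (N * ρ * π v) = _
    rw [hs]
    push_cast
    field_simp
  have h1 : 1 / 2 ≤ (1 - A) / s := by
    rw [le_div_iff₀ hs0]
    linarith
  have h2 : (1 - A) / s ≤ 1 := (div_le_one hs0).mpr hup2
  have hNπ : 0 < N * π v := by positivity
  have hK0 : 0 < K := by linarith
  rw [hth]
  constructor
  · calc 1 / (32 * K ^ 2) = 1 / 2 * (1 / (16 * K * K)) := by field_simp; norm_num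
      _ ≤ (1 - A) / s * (1 / (16 * K * (N * π v))) := by
        refine mul_le_mul h1 ?_ (by positivity) (by linarith)
        exact one_div_le_one_div_of_le (by positivity)
          (mul_le_mul_of_nonneg_left hn2 (by positivity))
  · refine mul_le_one₀ h2 (by positivity) ?_
    rw [div_le_one (by positivity)]
    linarith

lemma liftOf_valid {P : Matrix V V ℝ} {π : V → ℝ} {Φ K : ℝ} {H : SimpleGraph V} {k L : ℕ}
    {w : J → ℕ → V} {x : J → ℝ} {M : V → V → ℝ}
    (net : Network (offFlow P π) π Φ H) (hP : RowStochastic P) (hst : Stationary P π)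
    (hK : 1 ≤ K) (hk : 1 ≤ k) (hL : 0 < L)
    (hn1 : ∀ v, 1 ≤ K * π v * Fintype.card V) (hn2 : ∀ v, Fintype.card V * π v ≤ K)
    (hM0 : ∀ u v, 0 ≤ M u v) (hM1 : ∀ u, ∑ v, M u v = 1) (hM2 : ∀ v, ∑ u, M u v = 1)
    (hpath : PathSystem (offFlow P π) π M L (K * L) w x) :
    (liftOf P π K k L w x).Valid (offFlow P π) M (K * L) := by
  have hk' : (1 : ℝ) ≤ k := by exact_mod_cast hk
  have hL' : (1 : ℝ) ≤ L := by exact_mod_cast hL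
  have hK0 : 0 < K := by linarith
  have hρ : (1 : ℝ) / (4 * (L + 1) * k) ≤ 1 / 8 := by
    refine one_div_le_one_div_of_le (by norm_num) ?_
    nlinarith
  refine ⟨hpath, hM0, hM1, hM2, hL, ?_, ?_, ?_, ?_, net.pos, ?_, hst, net.nonneg, ?_, net.row, ?_,
    fun v => (liftOf_theta_bounds P π K k L w x hK hk v (net.pos v) (hn1 v) (hn2 v)).2⟩
  · change 0 < (1 : ℝ) / (4 * (L + 1) * k)
    positivity
  · change (1 : ℝ) / (4 * (L + 1) * k) < 1
    linarith
  · change 0 < (1 : ℝ) / (16 * K * (L + 1))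
    positivity
  · change (1 : ℝ) / (16 * K * (L + 1)) * (K * L) ≤ 1
    rw [div_mul_eq_mul_div, div_le_one (by positivity)]
    nlinarith [mul_pos hK0 (by linarith : (0 : ℝ) < L)]
  · intro u
    change ∑ v, π u * P u v = π u
    rw [← Finset.mul_sum, hP.2, mul_one]
  · intro u v huv
    exact if_neg huv
  · intro v
    change π v / 2 ≤ (1 - 1 / (4 * ((L : ℝ) + 1) * k))
      * (π v - 1 / (16 * K * ((L : ℝ) + 1)) / Fintype.card V
      - 1 / (16 * K * ((L : ℝ) + 1)) * (K * L * (π v / 2) + L / Fintype.card V))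
    have hn : (0 : ℝ) < Fintype.card V := by exact_mod_cast Fintype.card_pos_iff.mpr ⟨v⟩
    have hπ := net.pos v
    have h1 : 1 / (Fintype.card V : ℝ) ≤ K * π v := by
      rw [div_le_iff₀ hn]
      exact hn1 v
    have h2 : 1 / (16 * K * ((L : ℝ) + 1)) / Fintype.card V
        + 1 / (16 * K * ((L : ℝ) + 1)) * (K * L * (π v / 2) + L / Fintype.card V) ≤ π v / 8 := by
      have h3 : 1 / (16 * K * ((L : ℝ) + 1)) / Fintype.card V
          + 1 / (16 * K * ((L : ℝ) + 1)) * (K * L * (π v / 2) + L / Fintype.card V)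
          = 1 / (16 * K) * (1 / Fintype.card V) + 1 / 32 * π v * (L / (L + 1)) := by
        field_simp
        ring
      have h4 : (L : ℝ) / (L + 1) ≤ 1 := by
        rw [div_le_one (by positivity)]
        linarith
      have h5 : 1 / (16 * K) * (1 / (Fintype.card V : ℝ)) ≤ π v / 16 := by
        calc 1 / (16 * K) * (1 / (Fintype.card V : ℝ)) ≤ 1 / (16 * K) * (K * π v) :=
              mul_le_mul_of_nonneg_left h1 (by positivity)
          _ = π v / 16 := by field_simp
      rw [h3]
      nlinarith
    have h6 : (7 : ℝ) / 8 ≤ 1 - 1 / (4 * ((L : ℝ) + 1) * k) := by linarith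
    calc π v / 2 ≤ 7 / 8 * (7 / 8 * π v) := by linarith
      _ ≤ _ := mul_le_mul h6 (by linarith) (by positivity) (by linarith)

/-- The minorization constant of the lifted chain over the time `5 (L + 1) k`. -/
lemma liftOf_minor (P : Matrix V V ℝ) (π : V → ℝ) (K : ℝ) (k L : ℕ) (w : J → ℕ → V)
    (x : J → ℝ) (hK : 1 ≤ K) (hk : 1 ≤ k) :
    1 / (256 * K ^ 2) ≤ 1 / (32 * K ^ 2)
      * (1 - (liftOf P π K k L w x).ρ) ^ (((liftOf P π K k L w x).L + 1) * k) / 2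
      * (1 - (1 - (liftOf P π K k L w x).ρ) ^ (4 * ((L + 1) * k))) := by
  have hk' : (1 : ℝ) ≤ k := by exact_mod_cast hk
  have hK0 : 0 < K := by linarith
  change _ ≤ 1 / (32 * K ^ 2) * (1 - 1 / (4 * ((L : ℝ) + 1) * k)) ^ ((L + 1) * k) / 2
      * (1 - (1 - 1 / (4 * ((L : ℝ) + 1) * k)) ^ (4 * ((L + 1) * k)))
  set ρ : ℝ := 1 / (4 * ((L : ℝ) + 1) * k) with hρ
  have hρ0 : 0 < ρ := by positivity
  have hm : (((L + 1) * k : ℕ) : ℝ) * ρ = 1 / 4 := by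
    rw [hρ]
    push_cast
    field_simp
  have hS : ((4 * ((L + 1) * k) : ℕ) : ℝ) * ρ = 1 := by
    rw [hρ]
    push_cast
    field_simp
  have hρ1 : ρ ≤ 1 := by
    rw [hρ, div_le_one (by positivity)]
    nlinarith [(Nat.cast_nonneg L : (0 : ℝ) ≤ L)]
  have h1 := one_sub_le_pow ρ hρ1 ((L + 1) * k)
  have h2 := one_sub_pow_mul_le ρ hρ0.le hρ1 (4 * ((L + 1) * k))
  rw [hm] at h1
  rw [hS] at h2
  have h3 : (3 : ℝ) / 8 * (1 / 2) ≤ (1 - ρ) ^ ((L + 1) * k) / 2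
      * (1 - (1 - ρ) ^ (4 * ((L + 1) * k))) :=
    mul_le_mul (by linarith) (by linarith) (by norm_num) (by linarith)
  calc 1 / (256 * K ^ 2) = 1 / (32 * K ^ 2) * (1 / 8) := by field_simp; norm_num
    _ ≤ 1 / (32 * K ^ 2) * ((1 - ρ) ^ ((L + 1) * k) / 2 * (1 - (1 - ρ) ^ (4 * ((L + 1) * k)))) :=
        mul_le_mul_of_nonneg_left (by linarith) (by positivity)
    _ = _ := by ring

lemma bitWalk_nonneg (σ : Bool → V → V) (u v : V) : 0 ≤ bitWalk σ u v :=
  Finset.sum_nonneg fun b _ => by split_ifs <;> norm_num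

lemma edge_ncard {P : Matrix V V ℝ} {π : V → ℝ} (hπ : ∀ i, 0 < π i)
    (hrev : ∀ i j, π i * P i j = π j * P j i) :
    {p : V × V | p.1 ≠ p.2 ∧ (P p.1 p.2 ≠ 0 ∨ P p.2 p.1 ≠ 0)}.ncard
      = (Finset.univ.filter fun a : V × V => offFlow P π a.1 a.2 ≠ 0).card := by
  rw [← Set.ncard_coe_finset]
  congr 1
  ext ⟨u, v⟩
  have h : P v u ≠ 0 → P u v ≠ 0 := by
    intro h1 h2
    have h3 := hrev u v
    rw [h2, mul_zero] at h3
    exact mul_ne_zero (hπ v).ne' h1 h3.symm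
  rw [Finset.mem_coe, Finset.mem_filter_univ]
  change (u ≠ v ∧ (P u v ≠ 0 ∨ P v u ≠ 0)) ↔ offFlow P π u v ≠ 0
  by_cases huv : u = v
  · simp [huv, offFlow]
  · rw [offFlow, if_neg huv, mul_ne_zero_iff]
    exact ⟨fun h' => ⟨(hπ u).ne', h'.2.elim id h⟩, fun h' => ⟨huv, Or.inl h'.2⟩⟩

/-- The case of at least two vertices, with the constant for the size and the number `m` of rounds
of length `5 (L + 1) k` that bring the chain within distance `1 / 4`. -/
lemma exists_lifting [Nontrivial V] (K : ℝ) (hK : 1 ≤ K) (m : ℕ)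
    (hm : (1 - 1 / (256 * K ^ 2)) ^ m ≤ 1 / 4) (G : SimpleGraph V)
    (P : Matrix V V ℝ) (π : V → ℝ) (π₀ : ℝ) (hP : RowStochastic P)
    (hconf : ∀ i j, 0 < P i j → G.Adj i j ∨ i = j)
    (hirr : ∀ i j : V, ∃ t : ℕ, 0 < (P ^ t) i j)
    (hπ : ∀ i, 0 < π i) (hπ1 : ∑ i, π i = 1) (hst : Stationary P π)
    (hrev : ∀ i j, π i * P i j = π j * P j i) (hlazy : ∀ i, (1 : ℝ) / 2 ≤ P i i)
    (hbal : ∀ i j, π i ≤ K * π j) (hmin : ∀ i, π₀ ≤ π i) (hex : ∃ i, π i = π₀) :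
    ∃ (W : Type) (_ : Fintype W) (_ : DecidableEq W) (f : W → V)
      (Phat : Matrix W W ℝ) (pihat : W → ℝ),
      RowStochastic Phat ∧ (∀ wh, 0 < pihat wh) ∧ Stationary Phat pihat ∧
      (∀ uh vh, 0 < Phat uh vh → G.Adj (f uh) (f vh) ∨ f uh = f vh) ∧
      (∀ u : V, π u = ∑ wh ∈ Finset.univ.filter (fun wh => f wh = u), pihat wh) ∧
      (∀ u v : V, π u * P u v =
        ∑ uh ∈ Finset.univ.filter (fun uh => f uh = u),
          ∑ vh ∈ Finset.univ.filter (fun vh => f vh = v), pihat uh * Phat uh vh) ∧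
      ({p : W × W | p.1 ≠ p.2 ∧ 0 < Phat p.1 p.2}.ncard : ℝ)
        ≤ 13860 * ({p : V × V | p.1 ≠ p.2 ∧ (P p.1 p.2 ≠ 0 ∨ P p.2 p.1 ≠ 0)}.ncard : ℝ)
            * (1 / conductance P π) * (1 + Real.log (1 / π₀)) ∧
      (∀ t : ℕ,
        6600 * m * (1 / conductance P π) * (1 + Real.log (1 / π₀)) ^ 2 ≤ (t : ℝ) →
        ∀ uh : W, (1 / 2) * ∑ vh, |(Phat ^ t) uh vh - pihat vh| ≤ 1 / 4) := by
  classical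
  have net := network_of_chain hP hπ hπ1 hirr hrev hlazy
  set Φ := conductance P π with hΦ
  have hΦ0 := net.phi_pos
  have hΦ1 := net.phi_le_one
  obtain ⟨i₀, hi₀⟩ := hex
  have hπ₀ : 0 < π₀ := hi₀ ▸ hπ i₀
  have hπ₀1 : π₀ ≤ 1 := hi₀ ▸ (net.lt_one i₀).le
  obtain ⟨k, h, hk, hkL, hk2, hh1, hh2, hR⟩ := exists_lengths Φ π₀ hΦ0 hΦ1 hπ₀ hπ₀1
  set Lg := 1 + Real.log (1 / π₀) with hLg
  have hk' : (1 : ℝ) ≤ k := by exact_mod_cast hk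
  have hn1 : ∀ v, 1 ≤ K * π v * Fintype.card V := by
    intro v
    calc (1 : ℝ) = ∑ u, π u := hπ1.symm
      _ ≤ ∑ _u : V, K * π v := Finset.sum_le_sum fun u _ => hbal u v
      _ = _ := by rw [Finset.sum_const, Finset.card_univ, nsmul_eq_mul, mul_comm]
  have hn2 : ∀ v, Fintype.card V * π v ≤ K := by
    intro v
    calc (Fintype.card V : ℝ) * π v = ∑ _u : V, π v := by
          rw [Finset.sum_const, Finset.card_univ, nsmul_eq_mul]
      _ ≤ ∑ u, K * π u := Finset.sum_le_sum fun u _ => hbal v u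
      _ = K := by rw [← Finset.mul_sum, hπ1, mul_one]
  have hcard : Fintype.card V ≤ 2 ^ k := by
    have h1 : (Fintype.card V : ℝ) * π₀ ≤ 1 := by
      rw [← hπ1, ← nsmul_eq_mul, ← Finset.card_univ, ← Finset.sum_const]
      exact Finset.sum_le_sum fun u _ => hmin u
    have h2 : (Fintype.card V : ℝ) ≤ 2 ^ k :=
      le_of_mul_le_mul_right (h1.trans hk2.le) hπ₀
    exact_mod_cast h2
  have hh0 : 1 ≤ h := by
    rcases Nat.eq_zero_or_pos h with rfl | h0
    · norm_num at hh1
    · exact h0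
  have hh' : (1 : ℝ) ≤ h := by exact_mod_cast hh0
  obtain ⟨σ, hσ, hσk⟩ := exists_deBruijn (V := V)
  set L := 2 * (k * h) + 2 * (h * (k + 2)) with hLdef
  have hL0 : 0 < L := by positivity
  have hLr : (L : ℝ) = 2 * (k * h) + 2 * (h * (k + 2)) := by
    rw [hLdef]
    push_cast
    ring
  have hΛ : 2 * K * (k * h) + 2 * ((h * (k + 2) : ℕ) : ℝ) ≤ K * L := by
    rw [hLr]
    push_cast
    have : (0 : ℝ) ≤ h * (k + 2) := by positivity
    nlinarith
  obtain ⟨J, hJ, w, x, hcardJ, hpath⟩ := exists_pathSystem net K hn1 (by linarith) σ hσ π₀ hmin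
    hπ₀1 hπ₀ (h * (k + 2)) h k hR (by linarith) hk2 (K * L) (by positivity) hΛ
  have hD := liftOf_valid (k := k) net hP hst hK hk hL0 hn1 hn2 (bitWalk_nonneg σ) (bitWalk_row σ)
    (bitWalk_col σ hσ) hpath
  set D := liftOf P π K k L w x with hDdef
  have hLk : (L : ℝ) + 1 ≤ 10 * (h * k) := by
    rw [hLr]
    nlinarith
  have hLb : (L : ℝ) + 1 ≤ 660 * ((1 / Φ) * Lg) := by
    have h1 : (h : ℝ) ≤ 33 * (1 / Φ) := by
      rw [mul_one_div, le_div_iff₀ hΦ0]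
      exact hh2
    calc (L : ℝ) + 1 ≤ 10 * (h * k) := hLk
      _ ≤ 10 * (33 * (1 / Φ) * (2 * Lg)) := by gcongr
      _ = _ := by ring
  refine ⟨D.Node, inferInstance, inferInstance, D.proj, D.chain, D.dist, hD.chain_rowStochastic,
    hD.dist_pos, hD.stationary, ?_, ?_, ?_, ?_, ?_⟩
  · intro z y hzy
    rcases hD.conformant hzy with h1 | h1
    · exact Or.inr h1
    · rw [offFlow, ite_ne_left_iff] at h1
      refine hconf _ _ (lt_of_le_of_ne (hP.1 _ _) ?_)
      intro h2
      apply h1.2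
      rw [← h2, mul_zero]
  · intro u
    exact (LiftData.Valid.dist_fiber (D := D) u).symm
  · intro u v
    exact (hD.flow_eq u v).symm
  · rw [edge_ncard hπ hrev]
    have h1 := hD.size_le
    have h2 := net.card_le_edges
    have h3 : 0 < Fintype.card V := Fintype.card_pos
    set e := (Finset.univ.filter fun a : V × V => offFlow P π a.1 a.2 ≠ 0).card with he
    have h4 : Fintype.card J ≤ 4 * e := by omega
    have h5 : Fintype.card J * L ≤ 4 * e * L := Nat.mul_le_mul_right L h4
    have h6 : e ≤ e * L := Nat.le_mul_of_pos_right e hL0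
    have h7 : {p : D.Node × D.Node | p.1 ≠ p.2 ∧ 0 < D.chain p.1 p.2}.ncard
        ≤ 21 * (e * (L + 1)) := by
      refine h1.trans ?_
      change 4 * Fintype.card V + 4 * (Fintype.card J * L) + e ≤ 21 * (e * (L + 1))
      nlinarith
    have h8 : ({p : D.Node × D.Node | p.1 ≠ p.2 ∧ 0 < D.chain p.1 p.2}.ncard : ℝ)
        ≤ 21 * (e * ((L : ℝ) + 1)) := by exact_mod_cast h7
    calc _ ≤ 21 * (e * ((L : ℝ) + 1)) := h8
      _ ≤ 21 * (e * (660 * ((1 / Φ) * Lg))) := by gcongr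
      _ = _ := by ring
  · intro t ht z
    refine hD.mixing k (4 * ((L + 1) * k)) m (1 / (32 * K ^ 2)) (1 / (256 * K ^ 2))
      (fun v => (liftOf_theta_bounds P π K k L w x hK hk v (hπ v) (hn1 v) (hn2 v)).1)
      (hσk k hcard) hπ1 (liftOf_minor P π K k L w x hK hk) hm t ?_ z
    change ((L + 1) * k + 4 * ((L + 1) * k)) * m ≤ t
    have h1 : ((((L + 1) * k + 4 * ((L + 1) * k)) * m : ℕ) : ℝ) ≤ t := by
      refine le_trans ?_ ht
      push_cast
      have h2 : 0 ≤ (1 / Φ) * Lg := by linarith [(Nat.cast_nonneg L : (0 : ℝ) ≤ L)]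
      calc (((L : ℝ) + 1) * k + 4 * ((L + 1) * k)) * m = 5 * ((L + 1) * k) * m := by ring
        _ ≤ 5 * (660 * ((1 / Φ) * Lg) * (2 * Lg)) * m := by gcongr
        _ = _ := by ring
    exact_mod_cast h1

end Assembly

/-- Theorem 3 of the paper: lifting using expanders. For every `K ≥ 1`
there is `C(K) > 0` so that every irreducible reversible graph-conformant chain `P`
with `P_{ii} ≥ 1/2` and balanced positive stationary distribution
(`π_max ≤ K·π_min`, `π₀ = π_min`) admits a lifting of size
`O(|E(P)|·(1/Φ(P))·(1 + log(1/π₀)))` that mixes to within total-variation distance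
`1/4` in time `O((1/Φ(P))·(1 + log(1/π₀))²)`. -/
theorem lifting_via_expanders_exists (K : ℝ) (hK : 1 ≤ K) :
    ∃ C : ℝ, 0 < C ∧
    ∀ (V : Type) [Fintype V] [DecidableEq V] (G : SimpleGraph V)
      (P : Matrix V V ℝ) (π : V → ℝ) (π₀ : ℝ),
      G.Connected →
      RowStochastic P →
      -- conformant with G
      (∀ i j, 0 < P i j → G.Adj i j ∨ i = j) →
      -- irreducible
      (∀ i j : V, ∃ t : ℕ, 0 < (P ^ t) i j) →
      -- positive stationary distribution, reversible
      (∀ i, 0 < π i) → (∑ i, π i = 1) → Stationary P π →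
      (∀ i j, π i * P i j = π j * P j i) →
      -- lazy: P_{ii} ≥ 1/2
      (∀ i, (1 : ℝ) / 2 ≤ P i i) →
      -- balanced: max π ≤ K · min π
      (∀ i j, π i ≤ K * π j) →
      -- π₀ = min_i π_i
      (∀ i, π₀ ≤ π i) → (∃ i, π i = π₀) →
      ∃ (W : Type) (_ : Fintype W) (_ : DecidableEq W) (f : W → V)
        (Phat : Matrix W W ℝ) (pihat : W → ℝ),
        RowStochastic Phat ∧ (∀ wh, 0 < pihat wh) ∧ Stationary Phat pihat ∧
        -- (a) lifting of P w.r.t. f: graph conformance ...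
        (∀ uh vh, 0 < Phat uh vh → G.Adj (f uh) (f vh) ∨ f uh = f vh) ∧
        -- ... the stationary distribution projects onto π ...
        (∀ u : V, π u = ∑ wh ∈ Finset.univ.filter (fun wh => f wh = u), pihat wh) ∧
        -- ... and the ergodic flows project onto those of P
        (∀ u v : V, π u * P u v =
          ∑ uh ∈ Finset.univ.filter (fun uh => f uh = u),
            ∑ vh ∈ Finset.univ.filter (fun vh => f vh = v), pihat uh * Phat uh vh) ∧
        -- (b) size bound
        ({p : W × W | p.1 ≠ p.2 ∧ 0 < Phat p.1 p.2}.ncard : ℝ)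
          ≤ C * ({p : V × V | p.1 ≠ p.2 ∧ (P p.1 p.2 ≠ 0 ∨ P p.2 p.1 ≠ 0)}.ncard : ℝ)
              * (1 / conductance P π) * (1 + Real.log (1 / π₀)) ∧
        -- (c) mixing bound
        (∀ t : ℕ,
          C * (1 / conductance P π) * (1 + Real.log (1 / π₀)) ^ 2 ≤ (t : ℝ) →
          ∀ uh : W, (1 / 2) * ∑ vh, |(Phat ^ t) uh vh - pihat vh| ≤ 1 / 4) := by
  have hK0 : 0 < K := by linarith
  have hc0 : 0 < 1 / (256 * K ^ 2) := by positivity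
  obtain ⟨m, hm⟩ := exists_pow_lt_of_lt_one (by norm_num : (0 : ℝ) < 1 / 4)
    (by linarith : 1 - 1 / (256 * K ^ 2) < 1)
  refine ⟨13860 + 6600 * m, by positivity, ?_⟩
  intro V _ _ G P π π₀ _ hP hconf hirr hπ hπ1 hst hrev hlazy hbal hmin hex
  obtain ⟨i₀, hi₀⟩ := hex
  rcases subsingleton_or_nontrivial V with hV | hV
  · -- On a single vertex the chain is its own lifting; the conductance is `sInf ∅ = 0` here.
    have hP1 : P = 1 := by
      ext i j
      obtain rfl := Subsingleton.elim i j
      have := hP.2 i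
      rw [Fintype.sum_subsingleton _ i] at this
      rw [this, Matrix.one_apply_eq]
    have hu : ∀ i, π i = 1 := by
      intro i
      rw [← hπ1, Fintype.sum_subsingleton _ i]
    refine ⟨V, inferInstance, inferInstance, id, P, π, hP, hπ, hst, hconf, ?_, ?_, ?_, ?_⟩
    · intro u
      simp [Finset.filter_eq']
    · intro u v
      simp [Finset.filter_eq']
    · have h1 : {p : V × V | p.1 ≠ p.2 ∧ 0 < P p.1 p.2} = ∅ := by
        ext p
        simpa using fun h => absurd (Subsingleton.elim p.1 p.2) h
      have h2 : {p : V × V | p.1 ≠ p.2 ∧ (P p.1 p.2 ≠ 0 ∨ P p.2 p.1 ≠ 0)} = ∅ := by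
        ext p
        simpa using fun h => absurd (Subsingleton.elim p.1 p.2) h
      rw [h1, h2]
      simp
    · intro t _ u
      rw [Fintype.sum_subsingleton _ u, hP1, one_pow, Matrix.one_apply_eq, hu]
      norm_num
  · have hLg : 0 ≤ 1 + Real.log (1 / π₀) := by
      have h0 : 0 < π₀ := hi₀ ▸ hπ i₀
      have h1 : π₀ ≤ 1 := by
        rw [← hi₀, ← hπ1]
        exact Finset.single_le_sum (fun i _ => (hπ i).le) (Finset.mem_univ i₀)
      have := Real.log_nonneg (by rwa [le_div_iff₀ h0, one_mul] : 1 ≤ 1 / π₀)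
      linarith
    have hΦ := conductance_pos hP hπ hirr
    obtain ⟨W, hW, hW', f, Phat, pihat, h1, h2, h3, h4, h5, h6, h7, h8⟩ := exists_lifting K hK m
      hm.le G P π π₀ hP hconf hirr hπ hπ1 hst hrev hlazy hbal hmin ⟨i₀, hi₀⟩
    refine ⟨W, hW, hW', f, Phat, pihat, h1, h2, h3, h4, h5, h6, h7.trans ?_, fun t ht =>
      h8 t (le_trans ?_ ht)⟩
    · gcongr
      linarith [(Nat.cast_nonneg m : (0 : ℝ) ≤ m)]
    · gcongr
      linarith
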